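/- arXiv:1310.6521 — 2 statements merged into one kernel-verified Lean document; each statement's English description precedes it below -/
import Mathlib

section
/- Cayley polytopes of pairs of polygons with nef relation are normal: let F, G be lattice polygons in ℝ² such that F corresponds to an ample line bundle and G to a nef line bundle on the same nonsingular toric surface (equivalently: F and G have normal fans where the fan of F refines that of G and F is 2-dimensional with smooth normal fan). Then the lattice polytope P = Conv{F×{0}, G×{1}} ⊂ ℝ³ is normal. -/
open scoped Pointwise

def IsLatticePt {d : ℕ} (x : Fin d → ℝ) : Prop := ∀ i, ∃ z : ℤ, x i = (z : ℝ)

def IsLatticePolytope {d : ℕ} (P : Set (Fin d → ℝ)) : Prop :=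
  ∃ V : Finset (Fin d → ℝ), V.Nonempty ∧ (∀ v ∈ V, IsLatticePt v) ∧ P = convexHull ℝ ↑V

def IsNormalPolytope {d : ℕ} (P : Set (Fin d → ℝ)) : Prop :=
  ∀ n : ℕ, 1 ≤ n → ∀ x ∈ (n : ℝ) • P, IsLatticePt x →
    ∃ f : Fin n → (Fin d → ℝ), (∀ i, f i ∈ P ∧ IsLatticePt (f i)) ∧ x = ∑ i, f i

def P1 : Set (Fin 3 → ℝ) := convexHull ℝ {![0,0,0], ![1,0,0], ![0,1,0], ![0,0,1]}

def dot2 (x y : Fin 2 → ℝ) : ℝ := ∑ i, x i * y i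

def normalCone (P : Set (Fin 2 → ℝ)) (u : Fin 2 → ℝ) : Set (Fin 2 → ℝ) :=
  {y | ∀ x ∈ P, dot2 x y ≤ dot2 u y}

/-- The normal fan of `A` refines the normal fan of `B`: every normal cone of `A`
is contained in some normal cone of `B`. -/
def FanRefines (A B : Set (Fin 2 → ℝ)) : Prop :=
  ∀ u ∈ A, ∃ v ∈ B, normalCone A u ⊆ normalCone B v

/-- At every vertex the primitive edge directions form a ℤ-basis of ℤ². -/
def IsSmoothPolygon (F : Set (Fin 2 → ℝ)) : Prop :=
  ∀ u ∈ Set.extremePoints ℝ F, ∃ m₁ m₂ : Fin 2 → ℤ,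
    (m₁ 0 * m₂ 1 - m₁ 1 * m₂ 0 = 1 ∨ m₁ 0 * m₂ 1 - m₁ 1 * m₂ 0 = -1) ∧
    {y : Fin 2 → ℝ | ∃ t : ℝ, ∃ x ∈ F, 0 ≤ t ∧ y = t • (x - u)} =
      {y : Fin 2 → ℝ | ∃ a b : ℝ, 0 ≤ a ∧ 0 ≤ b ∧
        y = a • (fun i => (m₁ i : ℝ)) + b • (fun i => (m₂ i : ℝ))}

def emb (v : Fin 2 → ℝ) (t : ℝ) : Fin 3 → ℝ := ![v 0, v 1, t]

def cayley (F G : Set (Fin 2 → ℝ)) : Set (Fin 3 → ℝ) :=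
  convexHull ℝ ((fun v => emb v 0) '' F ∪ (fun v => emb v 1) '' G)


/-! ### Integer part -/

def idot (n x : ℤ × ℤ) : ℤ := n.1 * x.1 + n.2 * x.2

lemma idot_add (n x y : ℤ × ℤ) : idot n (x + y) = idot n x + idot n y := by
  simp [idot]; ring

lemma idot_sub (n x y : ℤ × ℤ) : idot n (x - y) = idot n x - idot n y := by
  simp [idot]; ring

lemma idot_neg (n x : ℤ × ℤ) : idot (-n) x = - idot n x := by
  simp [idot]; ring

/-- A maximally relaxed lattice-infeasible system of inequalities. -/
structure Tight {κ : Type} (T : Finset κ) (L : κ → ℤ × ℤ) (r : κ → ℤ) (z : κ → ℤ × ℤ) : Prop where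
  inf : ∀ x, ∃ j ∈ T, r j < idot (L j) x
  eq : ∀ j ∈ T, idot (L j) (z j) = r j + 1
  le : ∀ j ∈ T, ∀ k ∈ T, j ≠ k → idot (L j) (z k) ≤ r j

lemma exists_tight {κ : Type} [Fintype κ] [DecidableEq κ] (L : κ → ℤ × ℤ) (r : κ → ℤ)
    (h : ∀ x, ∃ j, r j < idot (L j) x) :
    ∃ (T : Finset κ) (r' : κ → ℤ) (z : κ → ℤ × ℤ), (∀ j, r j ≤ r' j) ∧ Tight T L r' z := by
  classical
  obtain ⟨T, hT⟩ : ∃ T : Finset κ, Minimal (fun T : Finset κ => ∀ x, ∃ j ∈ T, r j < idot (L j) x) T := by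
    apply exists_minimal_of_wellFoundedLT
    exact ⟨Finset.univ, fun x => by simpa using h x⟩
  have hw : ∀ j, ∃ z, j ∈ T → ∀ k ∈ T, k ≠ j → idot (L k) z ≤ r k := by
    intro j
    by_cases hj : j ∈ T
    · by_contra hc
      push Not at hc
      have h2 := hT.2 (y := T.erase j) (by
        intro x
        obtain ⟨_, k, hk, hkj, hlt⟩ := hc x
        exact ⟨k, Finset.mem_erase.2 ⟨hkj, hk⟩, hlt⟩) (Finset.erase_subset _ _)
      exact (Finset.notMem_erase j T) (h2 hj)
    · exact ⟨0, fun h => absurd h hj⟩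
  choose z hz using hw
  have hbd : ∀ r' : κ → ℤ, (∀ j, r j ≤ r' j) → (∀ x, ∃ j ∈ T, r' j < idot (L j) x) →
      ∀ j ∈ T, r' j ≤ idot (L j) (z j) := by
    intro r' hr hinf j hj
    obtain ⟨k, hk, hlt⟩ := hinf (z j)
    by_cases hkj : k = j
    · subst hkj; exact hlt.le
    · have := hz j hj k hk hkj
      have := hr k
      omega
  obtain ⟨M, ⟨r', hr', hinf', hsum⟩, hmax⟩ := Int.exists_greatest_of_bdd
    (P := fun M => ∃ r' : κ → ℤ, (∀ j, r j ≤ r' j) ∧ (∀ x, ∃ j ∈ T, r' j < idot (L j) x) ∧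
      ∑ j ∈ T, r' j = M)
    ⟨∑ j ∈ T, idot (L j) (z j), by
      rintro M ⟨r', h1, h2, rfl⟩
      exact Finset.sum_le_sum (hbd r' h1 h2)⟩
    ⟨_, r, fun _ => le_rfl, hT.1, rfl⟩
  have hz' : ∀ j, ∃ y, j ∈ T → ∀ k ∈ T, idot (L k) y ≤ Function.update r' j (r' j + 1) k := by
    intro j
    by_cases hj : j ∈ T
    · by_contra hc
      push Not at hc
      have := hmax (∑ k ∈ T, Function.update r' j (r' j + 1) k)
        ⟨Function.update r' j (r' j + 1), fun k => by
          by_cases hk : k = j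
          · subst hk; simp; linarith [hr' k]
          · simp [hk, hr' k], fun x => (hc x).2, rfl⟩
      rw [Finset.sum_update_of_mem hj] at this
      rw [← hsum, ← Finset.add_sum_erase T r' hj, Finset.sdiff_singleton_eq_erase] at this
      linarith
    · exact ⟨0, fun h => absurd h hj⟩
  choose y hy using hz'
  have hle : ∀ j ∈ T, ∀ k ∈ T, j ≠ k → idot (L j) (y k) ≤ r' j := by
    intro j hj k hk hjk
    simpa [hjk] using hy k hk j hj
  refine ⟨T, r', y, hr', hinf', ?_, hle⟩
  intro j hj
  have h1 : idot (L j) (y j) ≤ r' j + 1 := by simpa using hy j hj j hj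
  obtain ⟨k, hk, hlt⟩ := hinf' (y j)
  by_cases hkj : k = j
  · subst hkj; omega
  · have := hle k hk j hj hkj
    omega

/-- Key: an integer point which is a proper weighted average of three of the `z`'s is feasible. -/
lemma Tight.avg {κ : Type} {T : Finset κ} {L : κ → ℤ × ℤ} {r : κ → ℤ} {z : κ → ℤ × ℤ}
    (ht : Tight T L r z) {i j k : κ} (hi : i ∈ T) (hj : j ∈ T) (hk : k ∈ T)
    (hij : i ≠ j) (hik : i ≠ k) (hjk : j ≠ k) (x : ℤ × ℤ) (D a b c : ℤ)
    (ha : 0 ≤ a) (hb : 0 ≤ b) (hc : 0 ≤ c) (hs : a + b + c = D)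
    (haD : a < D) (hbD : b < D) (hcD : c < D)
    (h1 : D * x.1 = a * (z i).1 + b * (z j).1 + c * (z k).1)
    (h2 : D * x.2 = a * (z i).2 + b * (z j).2 + c * (z k).2) : False := by
  obtain ⟨l, hl, hlt⟩ := ht.inf x
  have key : D * idot (L l) x = a * idot (L l) (z i) + b * idot (L l) (z j) + c * idot (L l) (z k) := by
    simp only [idot]
    linear_combination (L l).1 * h1 + (L l).2 * h2
  have gen : ∀ k' ∈ T, l ≠ k' → idot (L l) (z k') ≤ r l := fun k' hk' h => ht.le l hl k' hk' h
  have geq := ht.eq l hl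
  have hge : D * (r l + 1) ≤ D * idot (L l) x := by
    apply mul_le_mul_of_nonneg_left <;> omega
  subst hs
  by_cases e1 : l = i
  · subst e1
    have t1 := mul_le_mul_of_nonneg_left (gen j hj hij) hb
    have t2 := mul_le_mul_of_nonneg_left (gen k hk hik) hc
    rw [geq] at key
    linarith
  · have g1 := mul_le_mul_of_nonneg_left (gen i hi e1) ha
    by_cases e2 : l = j
    · subst e2
      have t2 := mul_le_mul_of_nonneg_left (gen k hk hjk) hc
      rw [geq] at key
      linarith
    · have g2 := mul_le_mul_of_nonneg_left (gen j hj e2) hb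
      by_cases e3 : l = k
      · subst e3
        rw [geq] at key
        linarith
      · have t3 := mul_le_mul_of_nonneg_left (gen k hk e3) hc
        linarith

lemma Tight.parity {κ : Type} {T : Finset κ} {L : κ → ℤ × ℤ} {r : κ → ℤ} {z : κ → ℤ × ℤ}
    (ht : Tight T L r z) {i j : κ} (hi : i ∈ T) (hj : j ∈ T) (hij : i ≠ j) :
    ¬ (Even ((z j).1 - (z i).1) ∧ Even ((z j).2 - (z i).2)) := by
  rintro ⟨⟨p, hp⟩, ⟨q, hq⟩⟩
  obtain ⟨l, hl, hlt⟩ := ht.inf ((z i).1 + p, (z i).2 + q)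
  have key : 2 * idot (L l) ((z i).1 + p, (z i).2 + q) = idot (L l) (z i) + idot (L l) (z j) := by
    simp only [idot]
    linear_combination -(L l).1 * hp - (L l).2 * hq
  have gen : ∀ k' ∈ T, l ≠ k' → idot (L l) (z k') ≤ r l := fun k' hk' h => ht.le l hl k' hk' h
  have geq := ht.eq l hl
  by_cases e1 : l = i
  · subst e1
    have := gen j hj hij
    omega
  · have g1 := gen i hi e1
    by_cases e2 : l = j
    · subst e2
      omega
    · have g2 := gen j hj e2
      omega

lemma Tight.card {κ : Type} {T : Finset κ} {L : κ → ℤ × ℤ} {r : κ → ℤ} {z : κ → ℤ × ℤ}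
    (ht : Tight T L r z) : T.card ≤ 4 := by
  classical
  have : T.card ≤ (Finset.univ : Finset (Bool × Bool)).card := by
    apply Finset.card_le_card_of_injOn (fun i => (decide (Even (z i).1), decide (Even (z i).2)))
    · intro i _; simp
    · intro i hi j hj hEq
      by_contra hij
      apply ht.parity hi hj hij
      simp only [Prod.mk.injEq, decide_eq_decide] at hEq
      rw [Int.even_sub, Int.even_sub]
      exact ⟨hEq.1.symm, hEq.2.symm⟩
  simpa using this

def idet (a b : ℤ × ℤ) : ℤ := a.1 * b.2 - a.2 * b.1

/-- In a lattice triangle of determinant `D ≥ 2` there is an extra lattice point. -/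
lemma exists_pt (A B : ℤ × ℤ) (D : ℤ) (hD : 2 ≤ D) (h : idet A B = D) :
    ∃ (x : ℤ × ℤ) (i j : ℤ), 0 ≤ i ∧ 0 ≤ j ∧ i < D ∧ j < D ∧ 0 < i + j ∧ i + j ≤ D ∧
      D * x.1 = i * A.1 + j * B.1 ∧ D * x.2 = i * A.2 + j * B.2 := by
  have step : ∀ (t : ℤ × ℤ) (i j : ℤ), D * t.1 = i * A.1 + j * B.1 → D * t.2 = i * A.2 + j * B.2 →
      ¬ (D ∣ i ∧ D ∣ j) → ∃ (x : ℤ × ℤ) (i j : ℤ), 0 ≤ i ∧ 0 ≤ j ∧ i < D ∧ j < D ∧ 0 < i + j ∧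
      i + j ≤ D ∧ D * x.1 = i * A.1 + j * B.1 ∧ D * x.2 = i * A.2 + j * B.2 := by
    intro t i j h1 h2 hn
    have hi0 := Int.emod_nonneg i (by omega : D ≠ 0)
    have hj0 := Int.emod_nonneg j (by omega : D ≠ 0)
    have hi1 := Int.emod_lt_of_pos i (by omega : 0 < D)
    have hj1 := Int.emod_lt_of_pos j (by omega : 0 < D)
    have hi := Int.emod_add_mul_ediv i D
    have hj := Int.emod_add_mul_ediv j D
    have hpos : 0 < i % D + j % D := by
      by_contra hc
      exact hn ⟨Int.dvd_of_emod_eq_zero (by omega), Int.dvd_of_emod_eq_zero (by omega)⟩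
    set i' := i % D
    set j' := j % D
    set p := i / D
    set q := j / D
    have e1 : D * (t.1 - p * A.1 - q * B.1) = i' * A.1 + j' * B.1 := by
      linear_combination h1 - A.1 * hi - B.1 * hj
    have e2 : D * (t.2 - p * A.2 - q * B.2) = i' * A.2 + j' * B.2 := by
      linear_combination h2 - A.2 * hi - B.2 * hj
    by_cases hle : i' + j' ≤ D
    · exact ⟨(_, _), i', j', hi0, hj0, hi1, hj1, hpos, hle, e1, e2⟩
    · refine ⟨(A.1 + B.1 - (t.1 - p * A.1 - q * B.1), A.2 + B.2 - (t.2 - p * A.2 - q * B.2)),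
        D - i', D - j', by omega, by omega, by omega, by omega, by omega, by omega, ?_, ?_⟩
      · linear_combination - e1
      · linear_combination - e2
  simp only [idet] at h
  by_cases c1 : D ∣ B.2 ∧ D ∣ -A.2
  · by_cases c2 : D ∣ -B.1 ∧ D ∣ A.1
    · exfalso
      obtain ⟨⟨a, ha⟩, ⟨b, hb⟩⟩ := c1
      obtain ⟨⟨c, hc⟩, ⟨d, hd⟩⟩ := c2
      have : D * (D * (d * a - b * c)) = D * 1 := by
        have hb' : A.2 = - (D * b) := by linarith
        have hc' : B.1 = - (D * c) := by linarith
        rw [ha, hd, hb', hc'] at h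
        linear_combination h
      have := mul_left_cancel₀ (by omega : D ≠ 0) this
      have hd1 : D ∣ 1 := ⟨_, this.symm⟩
      have := Int.le_of_dvd one_pos hd1
      omega
    · exact step (0, 1) (-B.1) A.1 (by simp; ring) (by simp; linarith) c2
  · exact step (1, 0) B.2 (-A.2) (by simp; linarith) (by simp; ring) c1

lemma Tight.det_one {κ : Type} {T : Finset κ} {L : κ → ℤ × ℤ} {r : κ → ℤ} {z : κ → ℤ × ℤ}
    (ht : Tight T L r z) {i j k : κ} (hi : i ∈ T) (hj : j ∈ T) (hk : k ∈ T)
    (hij : i ≠ j) (hik : i ≠ k) (hjk : j ≠ k) :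
    idet (z j - z i) (z k - z i) = 1 ∨ idet (z j - z i) (z k - z i) = -1 := by
  have aux : ∀ {j k : κ}, j ∈ T → k ∈ T → i ≠ j → i ≠ k → j ≠ k →
      ¬ 2 ≤ idet (z j - z i) (z k - z i) := by
    intro j k hj hk hij hik hjk h2
    obtain ⟨x, p, q, hp, hq, hpD, hqD, hpos, hle, h1, h2'⟩ := exists_pt _ _ _ h2 rfl
    set D := idet (z j - z i) (z k - z i)
    simp only [Prod.fst_sub, Prod.snd_sub] at h1 h2'
    refine ht.avg hi hj hk hij hik hjk (x + z i) D (D - p - q) p q (by omega) hp hq (by ring)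
      (by omega) hpD hqD ?_ ?_
    · simp only [Prod.fst_add]; linear_combination h1
    · simp only [Prod.snd_add]; linear_combination h2'
  have a1 := aux hj hk hij hik hjk
  have a2 := aux hk hj hik hij hjk.symm
  have hanti : idet (z k - z i) (z j - z i) = - idet (z j - z i) (z k - z i) := by
    simp [idet]; ring
  have hodd : ¬ Even (idet (z j - z i) (z k - z i)) := by
    have p1 := ht.parity hi hj hij
    have p2 := ht.parity hi hk hik
    have p3 := ht.parity hj hk hjk
    simp only [idet, Prod.fst_sub, Prod.snd_sub, Int.even_sub, Int.even_mul] at p1 p2 p3 ⊢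
    clear aux a1 a2 hanti
    revert p1 p2 p3
    generalize Even (z i).1 = a
    generalize Even (z i).2 = b
    generalize Even (z j).1 = c
    generalize Even (z j).2 = d
    generalize Even (z k).1 = e
    generalize Even (z k).2 = f
    by_cases a <;> by_cases b <;> by_cases c <;> by_cases d <;> by_cases e <;> by_cases f <;> simp [*]
  have : idet (z j - z i) (z k - z i) ≠ 0 := by
    intro h; rw [h] at hodd; simp at hodd
  omega

lemma edge_aux (x ny nz w A₁ A₂ s1 s2 : ℤ) (hx : 0 < x) (hy : ny < 0)
    (hA1 : x = A₁ + 1) (hA2 : w = A₂ + 1)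
    (hs1 : 0 < s1) (hs2 : 0 < s2) (e1 e2 v1 v2 : ℤ) (hv : ¬ (v1 = 0 ∧ v2 = 0))
    (hv0 : s1 * v1 + s2 * v2 = 0)
    (h1 : x * e1 + ny * e2 ≤ A₁) (h2 : nz * e1 + w * e2 ≤ A₂)
    (h3 : x * e1 + ny * e2 + (x * v1 + ny * v2) ≤ A₁)
    (h4 : nz * e1 + w * e2 + (nz * v1 + w * v2) ≤ A₂) :
    ∃ d1 d2 : ℤ, x * d1 + ny * d2 < 0 ∧ nz * d1 + w * d2 < 0 ∧
      ((d1 = e1 ∧ d2 = e2 - 1) ∨ (d1 = e1 + v1 ∧ d2 = e2 + v2 - 1)) := by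
  rcases lt_trichotomy v1 0 with h | h | h
  · have h' : 0 < v2 := by
      have : s1 * v1 < 0 := mul_neg_of_pos_of_neg hs1 h
      exact pos_of_mul_pos_right (by linarith : 0 < s2 * v2) hs2.le
    refine ⟨e1 + v1, e2 + v2 - 1, ?_, by linarith, Or.inr ⟨rfl, rfl⟩⟩
    have t1 : x * 1 ≤ x * (-v1) := mul_le_mul_of_nonneg_left (by omega) hx.le
    have t2 : (-ny) * 1 ≤ (-ny) * v2 := mul_le_mul_of_nonneg_left (by omega) (by omega)
    linarith
  · exfalso
    apply hv
    have : s2 * v2 = 0 := by rw [h] at hv0; linarith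
    refine ⟨h, ?_⟩
    rcases mul_eq_zero.1 this with h | h
    · omega
    · exact h
  · have h' : 0 < -v2 := by
      have : 0 < s1 * v1 := mul_pos hs1 h
      exact pos_of_mul_pos_right (by linarith : 0 < s2 * -v2) hs2.le
    refine ⟨e1, e2 - 1, ?_, by linarith, Or.inl ⟨rfl, rfl⟩⟩
    have t1 : x * 1 ≤ x * v1 := mul_le_mul_of_nonneg_left (by omega) hx.le
    have t2 : (-ny) * 1 ≤ (-ny) * (-v2) := mul_le_mul_of_nonneg_left (by omega) (by omega)
    linarith

lemma same_aux (x ny nz w d1 d2 : ℤ) (hx : 0 < x) (hy : ny < 0) (hz : nz < 0) (hw : 0 < w)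
    (h1 : x * d1 + ny * d2 < 0) (h2 : nz * d1 + w * d2 < 0) :
    (0 < d1 ∧ 0 < d2) ∨ (d1 < 0 ∧ d2 < 0) := by
  rcases lt_trichotomy d1 0 with h | h | h
  · right; refine ⟨h, ?_⟩
    by_contra hc; nlinarith
  · exfalso; subst h
    rcases le_total d2 0 with h | h <;> nlinarith
  · left; refine ⟨h, ?_⟩
    by_contra hc; nlinarith

/-- The final contradiction, in standard coordinates, alternating case. -/
lemma quad_alt (α₁ α₂ β₁ β₂ e v e' v' : ℤ × ℤ) (A₁ A₂ B₁ B₂ : ℤ)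
    (a11 : idot α₁ (1, 0) = A₁ + 1) (a12 : idot α₁ (0, 0) ≤ A₁) (a13 : idot α₁ (1, 1) ≤ A₁)
    (a21 : idot α₂ (0, 1) = A₂ + 1) (a22 : idot α₂ (0, 0) ≤ A₂) (a23 : idot α₂ (1, 1) ≤ A₂)
    (b11 : idot β₁ (0, 0) = B₁ - 1) (b12 : B₁ ≤ idot β₁ (1, 0)) (b13 : B₁ ≤ idot β₁ (0, 1))
    (b21 : idot β₂ (1, 1) = B₂ - 1) (b22 : B₂ ≤ idot β₂ (1, 0)) (b23 : B₂ ≤ idot β₂ (0, 1))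
    (hv : v ≠ 0) (hv0 : idot β₁ v = 0) (e1 : idot α₁ e ≤ A₁) (e2 : idot α₂ e ≤ A₂)
    (e3 : idot α₁ (e + v) ≤ A₁) (e4 : idot α₂ (e + v) ≤ A₂) (e5 : B₁ ≤ idot β₁ e)
    (hv' : v' ≠ 0) (hv0' : idot β₂ v' = 0) (e1' : idot α₁ e' ≤ A₁) (e2' : idot α₂ e' ≤ A₂)
    (e3' : idot α₁ (e' + v') ≤ A₁) (e4' : idot α₂ (e' + v') ≤ A₂) (e5' : B₂ ≤ idot β₂ e') :
    False := by
  obtain ⟨x, ny⟩ := α₁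
  obtain ⟨nz, w⟩ := α₂
  obtain ⟨b1, b2⟩ := β₁
  obtain ⟨c1, c2⟩ := β₂
  rw [idot_add] at e3 e4 e3' e4'
  simp only [idot, mul_one, mul_zero, add_zero, zero_add] at *
  have hx : 0 < x := by linarith
  have hy : ny < 0 := by linarith
  have hz : nz < 0 := by linarith
  have hw : 0 < w := by linarith
  have same := fun d1 d2 => same_aux x ny nz w d1 d2 hx hy hz hw
  obtain ⟨d1, d2, p1, p2, p3⟩ := edge_aux x ny nz w A₁ A₂ b1 b2 hx hy a11 a21 (by linarith)
    (by linarith) e.1 e.2 v.1 v.2 (fun h => hv (Prod.ext h.1 h.2)) hv0 e1 e2 e3 e4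
  obtain ⟨d1', d2', q1, q2, q3⟩ := edge_aux x ny nz w A₁ A₂ (-c1) (-c2) hx hy a11 a21 (by linarith)
    (by linarith) e'.1 e'.2 v'.1 v'.2 (fun h => hv' (Prod.ext h.1 h.2)) (by linarith) e1' e2' e3' e4'
  have hb1 : 0 < b1 := by linarith
  have hb2 : 0 < b2 := by linarith
  have hc1 : c1 < 0 := by linarith
  have hc2 : c2 < 0 := by linarith
  have P : 0 < d1 ∧ 0 < d2 := by
    rcases same d1 d2 p1 p2 with h | ⟨h1, h2⟩
    · exact h
    · exfalso
      have : b1 * d1 + b2 * (d2 + 1) ≥ B₁ := by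
        rcases p3 with ⟨rfl, rfl⟩ | ⟨rfl, rfl⟩ <;> linarith
      have t1 : b1 * d1 < 0 := mul_neg_of_pos_of_neg hb1 h1
      have t2 : b2 * (d2 + 1) ≤ 0 := mul_nonpos_of_nonneg_of_nonpos hb2.le (by omega)
      linarith
  have Q : d1' < 0 ∧ d2' < 0 := by
    rcases same d1' d2' q1 q2 with ⟨h1, h2⟩ | h
    · exfalso
      have : c1 * d1' + c2 * (d2' + 1) ≥ B₂ := by
        rcases q3 with ⟨rfl, rfl⟩ | ⟨rfl, rfl⟩ <;> linarith
      have t1 : c1 * d1' ≤ c1 * 1 := mul_le_mul_of_nonpos_left (by omega) hc1.le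
      have t2 : c2 * (d2' + 1) < c2 * 1 := mul_lt_mul_of_neg_left (by omega) hc2
      linarith
    · exact h
  obtain ⟨P1, P2⟩ := P
  obtain ⟨Q1, Q2⟩ := Q
  -- x d1 < y d2, w d2 < z d1 ; signs
  have k1 : x * w < ny * nz := by
    by_contra hc
    have m1 : (x * d1) * (w * d2) < (-ny * d2) * (-nz * d1) := by
      apply mul_lt_mul'' <;> first | linarith | positivity
    have : 0 < d1 * d2 := by positivity
    nlinarith
  have k2 : ny * nz < x * w := by
    by_contra hc
    have m1 : (-ny * -d2') * (-nz * -d1') < (x * -d1') * (w * -d2') := by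
      apply mul_lt_mul''
      · linarith
      · linarith
      · apply mul_nonneg <;> linarith
      · apply mul_nonneg <;> linarith
    have : 0 < d1' * d2' := mul_pos_of_neg_of_neg Q1 Q2
    nlinarith
  linarith

/-- The non-alternating case: a separating direction. -/
lemma quad_sep (x y z w b c d f A₁ A₂ B₁ B₂ p1 p2 q1 q2 : ℤ)
    (a1 : x = A₁ + 1) (a3 : y ≤ A₁) (a4 : x - y ≤ A₁)
    (a5 : w = A₂ + 1) (a6 : 0 ≤ A₂) (a7 : z ≤ A₂)
    (b1 : 0 = B₁ - 1) (b3 : B₁ ≤ c) (b4 : B₁ ≤ b - c)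
    (b5 : d - f = B₂ - 1) (b6 : B₂ ≤ 0) (b7 : B₂ ≤ d)
    (hp1 : x * p1 + y * p2 ≤ A₁) (hp2 : z * p1 + w * p2 ≤ A₂)
    (hq1 : B₁ ≤ b * q1 + c * q2) (hq2 : B₂ ≤ d * q1 + f * q2)
    (h : q1 + q2 ≤ p1 + p2) : False := by
  have P : p1 + p2 ≤ 0 := by
    by_contra hc
    have t1 : y * 1 ≤ y * (p1 + p2) := mul_le_mul_of_nonneg_left (by omega) (by omega)
    have t2 : p1 < 1 := by
      by_contra h1
      have : (x - y) * 1 ≤ (x - y) * p1 := mul_le_mul_of_nonneg_left (by omega) (by omega)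
      linarith
    have t3 : 0 ≤ (w - z) * (-p1) := mul_nonneg (by omega) (by omega)
    have t4 : w * 1 ≤ w * (p1 + p2) := mul_le_mul_of_nonneg_left (by omega) (by omega)
    linarith
  have t1 : 0 ≤ c * (-(q1 + q2)) := mul_nonneg (by omega) (by omega)
  have t2 : 0 < q1 := by
    by_contra h1
    have : 0 ≤ (b - c) * (-q1) := mul_nonneg (by omega) (by omega)
    linarith
  have t3 : (f - d) * 1 ≤ (f - d) * q1 := mul_le_mul_of_nonneg_left (by omega) (by omega)
  have t4 : 0 ≤ f * (-(q1 + q2)) := mul_nonneg (by omega) (by omega)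
  linarith

lemma quad (α₁ α₂ β₁ β₂ f₁ f₂ g₁ g₂ : ℤ × ℤ) (A₁ A₂ B₁ B₂ : ℤ)
    (a11 : idot α₁ g₁ = A₁ + 1) (a12 : idot α₁ f₁ ≤ A₁) (a13 : idot α₁ f₂ ≤ A₁)
    (a14 : idot α₁ g₂ ≤ A₁)
    (a21 : idot α₂ g₂ = A₂ + 1) (a22 : idot α₂ f₁ ≤ A₂) (a23 : idot α₂ f₂ ≤ A₂)
    (a24 : idot α₂ g₁ ≤ A₂)
    (b11 : idot β₁ f₁ = B₁ - 1) (b12 : B₁ ≤ idot β₁ g₁) (b13 : B₁ ≤ idot β₁ g₂)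
    (b14 : B₁ ≤ idot β₁ f₂)
    (b21 : idot β₂ f₂ = B₂ - 1) (b22 : B₂ ≤ idot β₂ g₁) (b23 : B₂ ≤ idot β₂ g₂)
    (b24 : B₂ ≤ idot β₂ f₁)
    (d1 : idet (g₁ - f₁) (g₂ - f₁) = 1 ∨ idet (g₁ - f₁) (g₂ - f₁) = -1)
    (d2 : idet (g₁ - f₁) (f₂ - f₁) = 1 ∨ idet (g₁ - f₁) (f₂ - f₁) = -1)
    (d3 : idet (g₂ - f₁) (f₂ - f₁) = 1 ∨ idet (g₂ - f₁) (f₂ - f₁) = -1)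
    (d4 : idet (g₂ - g₁) (f₂ - g₁) = 1 ∨ idet (g₂ - g₁) (f₂ - g₁) = -1)
    (E : ∃ e v : ℤ × ℤ, v ≠ 0 ∧ idot β₁ v = 0 ∧ idot α₁ e ≤ A₁ ∧ idot α₂ e ≤ A₂ ∧
      idot α₁ (e + v) ≤ A₁ ∧ idot α₂ (e + v) ≤ A₂ ∧ B₁ ≤ idot β₁ e)
    (E' : ∃ e v : ℤ × ℤ, v ≠ 0 ∧ idot β₂ v = 0 ∧ idot α₁ e ≤ A₁ ∧ idot α₂ e ≤ A₂ ∧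
      idot α₁ (e + v) ≤ A₁ ∧ idot α₂ (e + v) ≤ A₂ ∧ B₂ ≤ idot β₂ e)
    (H : ∀ w : ℤ × ℤ, ∃ p q : ℤ × ℤ, idot α₁ p ≤ A₁ ∧ idot α₂ p ≤ A₂ ∧ B₁ ≤ idot β₁ q ∧
      B₂ ≤ idot β₂ q ∧ idot w q ≤ idot w p) : False := by
  obtain ⟨E1, hE1⟩ : ∃ E1, E1 = g₁ - f₁ := ⟨_, rfl⟩
  obtain ⟨E2, hE2⟩ : ∃ E2, E2 = g₂ - f₁ := ⟨_, rfl⟩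
  obtain ⟨F2, hF2⟩ : ∃ F2, F2 = f₂ - f₁ := ⟨_, rfl⟩
  have e1 : g₂ - g₁ = E2 - E1 := by rw [hE1, hE2]; abel
  have e2 : f₂ - g₁ = F2 - E1 := by rw [hE1, hF2]; abel
  obtain rfl : g₁ = f₁ + E1 := by rw [hE1]; abel
  obtain rfl : g₂ = f₁ + E2 := by rw [hE2]; abel
  obtain rfl : f₂ = f₁ + F2 := by rw [hF2]; abel
  rw [e1, e2] at d4
  simp only [add_sub_cancel_left] at d1 d2 d3
  clear e1 e2 hE1 hE2 hF2
  simp only [idot_add] at a11 a13 a14 a21 a23 a24 b12 b13 b14 b21 b22 b23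
  obtain ⟨δ, hδ⟩ : ∃ δ, δ = idet E1 E2 := ⟨_, rfl⟩
  rw [← hδ] at d1
  have hδ2 : δ * δ = 1 := by rcases d1 with h | h <;> rw [h] <;> norm_num
  obtain ⟨C, hC⟩ : ∃ C : ℤ × ℤ → ℤ × ℤ, ∀ y, C y = (δ * idet y E2, δ * idet E1 y) := ⟨_, fun _ => rfl⟩
  obtain ⟨N, hN⟩ : ∃ N : ℤ × ℤ → ℤ × ℤ, ∀ n, N n = (idot n E1, idot n E2) := ⟨_, fun _ => rfl⟩
  have hNC : ∀ n y, idot n y = idot (N n) (C y) := by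
    intro n y
    have : idet y E2 * idot n E1 + idet E1 y * idot n E2 = δ * idot n y := by
      rw [hδ]; simp only [idet, idot]; ring
    rw [hC, hN]
    simp only [idot] at this ⊢
    linear_combination (-δ) * this - (n.1 * y.1 + n.2 * y.2) * hδ2
  have hC1 : C E1 = (1, 0) := by
    rw [hC]; refine Prod.ext ?_ ?_
    · simp only; rw [← hδ, hδ2]
    · simp [idet]; right; ring
  have hC2 : C E2 = (0, 1) := by
    rw [hC]; refine Prod.ext ?_ ?_
    · simp [idet]; right; ring
    · simp only; rw [← hδ, hδ2]
  have hCsub : ∀ y, C (y - f₁) = C y - C f₁ := by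
    intro y; simp only [hC]; refine Prod.ext ?_ ?_ <;> simp [idet] <;> ring
  have hCadd : ∀ x y, C (x + y) = C x + C y := by
    intro x y; simp only [hC]; refine Prod.ext ?_ ?_ <;> simp [idet] <;> ring
  have hC0 : ∀ y, C y = 0 → y = 0 := by
    intro y hy
    have h1 := hNC (1, 0) y
    have h2 := hNC (0, 1) y
    rw [hy] at h1 h2
    simp [idot] at h1 h2
    exact Prod.ext h1 h2
  have cases3 : C F2 = (1, 1) ∨ C F2 = (1, -1) ∨ C F2 = (-1, 1) := by
    have h4 : idet (E2 - E1) (F2 - E1) = δ - idet F2 E2 - idet E1 F2 := by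
      rw [hδ]; simp [idet]; ring
    have h3 : idet E2 F2 = - idet F2 E2 := by simp [idet]; ring
    rw [h4] at d4
    rw [h3] at d3
    rw [hC]
    generalize idet F2 E2 = S at *
    generalize idet E1 F2 = U at *
    simp only [Prod.mk.injEq]
    rcases d1 with rfl | rfl <;> omega
  have key : ∀ n y, idot (N n) (C y - C f₁) = idot n y - idot n f₁ := by
    intro n y
    rw [← hCsub, ← hNC, idot_sub]
  have key2 : ∀ n y, idot (N n) (C y) = idot n y := fun n y => (hNC n y).symm
  have n1 : ∀ n, idot n E1 = idot (N n) (1, 0) := fun n => by rw [← hC1, hNC]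
  have n2 : ∀ n, idot n E2 = idot (N n) (0, 1) := fun n => by rw [← hC2, hNC]
  rcases cases3 with hF | hF
  · have n3 : ∀ n, idot n F2 = idot (N n) (1, 1) := fun n => by rw [← hF, hNC]
    have n0 : ∀ n, idot n (0, 0) = 0 := fun n => by simp [idot]
    simp only [n1, n2, n3] at a11 a13 a14 a21 a23 a24 b12 b13 b14 b21 b22 b23
    obtain ⟨e, v, hv, hv0, h1, h2, h3, h4, h5⟩ := E
    obtain ⟨e', v', hv', hv0', h1', h2', h3', h4', h5'⟩ := E'
    have hadd : ∀ e v : ℤ × ℤ, C e - C f₁ + C v = C (e + v) - C f₁ := by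
      intro e v; rw [hCadd]; abel
    refine quad_alt (N α₁) (N α₂) (N β₁) (N β₂) (C e - C f₁) (C v) (C e' - C f₁) (C v')
      (A₁ - idot α₁ f₁) (A₂ - idot α₂ f₁) (B₁ - idot β₁ f₁) (B₂ - idot β₂ f₁)
      ?_ ?_ ?_ ?_ ?_ ?_ ?_ ?_ ?_ ?_ ?_ ?_ (fun h => hv (hC0 _ h)) ?_ ?_ ?_ ?_ ?_ ?_
      (fun h => hv' (hC0 _ h)) ?_ ?_ ?_ ?_ ?_ ?_
    all_goals first
      | (rw [hadd, key]; linarith)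
      | (rw [key]; linarith)
      | (rw [key2]; assumption)
      | (rw [n0]; linarith)
      | linarith
  · obtain ⟨p, q, hp1, hp2, hq1, hq2, hpq⟩ := H (δ * (E2.2 - E1.2), δ * (E1.1 - E2.1))
    have hw : ∀ y, idot (δ * (E2.2 - E1.2), δ * (E1.1 - E2.1)) y = (C y).1 + (C y).2 := by
      intro y; rw [hC]; simp [idot, idet]; ring
    have hw' : (C q - C f₁).1 + (C q - C f₁).2 ≤ (C p - C f₁).1 + (C p - C f₁).2 := by
      rw [hw, hw] at hpq
      simp only [Prod.fst_sub, Prod.snd_sub]; linarith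
    have k1 := key α₁ p
    have k2 := key α₂ p
    have k3 := key β₁ q
    have k4 := key β₂ q
    rcases hF with hF | hF
    · have n3 : ∀ n, idot n F2 = idot (N n) (1, -1) := fun n => by rw [← hF, hNC]
      simp only [n1, n2, n3] at a11 a13 a14 a21 a23 a24 b12 b13 b14 b21 b22 b23
      generalize C p - C f₁ = P at *
      generalize C q - C f₁ = Q at *
      simp only [idot, mul_one, mul_zero, add_zero, zero_add, mul_neg] at a11 a13 a14 a21 a23 a24 b12 b13 b14 b21 b22 b23 k1 k2 k3 k4
      refine quad_sep (N α₁).1 (N α₁).2 (N α₂).1 (N α₂).2 (N β₁).1 (N β₁).2 (N β₂).1 (N β₂).2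
        (A₁ - idot α₁ f₁) (A₂ - idot α₂ f₁) (B₁ - idot β₁ f₁) (B₂ - idot β₂ f₁) P.1 P.2 Q.1 Q.2
        ?_ ?_ ?_ ?_ ?_ ?_ ?_ ?_ ?_ ?_ ?_ ?_ ?_ ?_ ?_ ?_ hw'
      all_goals simp only [idot] at *; linarith
    · have n3 : ∀ n, idot n F2 = idot (N n) (-1, 1) := fun n => by rw [← hF, hNC]
      simp only [n1, n2, n3] at a11 a13 a14 a21 a23 a24 b12 b13 b14 b21 b22 b23
      generalize C p - C f₁ = P at *
      generalize C q - C f₁ = Q at *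
      simp only [idot, mul_one, mul_zero, add_zero, zero_add, mul_neg] at a11 a13 a14 a21 a23 a24 b12 b13 b14 b21 b22 b23 k1 k2 k3 k4
      refine quad_sep (N α₂).2 (N α₂).1 (N α₁).2 (N α₁).1 (N β₁).2 (N β₁).1 (N β₂).2 (N β₂).1
        (A₂ - idot α₂ f₁) (A₁ - idot α₁ f₁) (B₁ - idot β₁ f₁) (B₂ - idot β₂ f₁) P.2 P.1 Q.2 Q.1
        ?_ ?_ ?_ ?_ ?_ ?_ ?_ ?_ ?_ ?_ ?_ ?_ ?_ ?_ ?_ ?_ (by linarith)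
      all_goals simp only [idot] at *; linarith

/-- Core decomposition lemma. -/
lemma core {ι : Type} [Fintype ι] (n : ι → ℤ × ℤ) (a c : ι → ℤ) (m : ℤ × ℤ)
    (amp : ∀ i, ∃ e v : ℤ × ℤ, v ≠ 0 ∧ idot (n i) v = 0 ∧ idot (n i) e = a i ∧
      (∀ j, idot (n j) e ≤ a j) ∧ ∀ j, idot (n j) (e + v) ≤ a j)
    (H : ∀ w : ℤ × ℤ, ∃ e g : ℤ × ℤ, (∀ j, idot (n j) e ≤ a j) ∧ (∀ j, idot (n j) g ≤ c j) ∧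
      idot w m ≤ idot w e + idot w g) :
    ∃ x : ℤ × ℤ, (∀ j, idot (n j) x ≤ a j) ∧ ∀ j, idot (n j) (m - x) ≤ c j := by
  classical
  by_contra hno
  push Not at hno
  let L : ι ⊕ ι → ℤ × ℤ := Sum.elim n (fun i => - n i)
  let r : ι ⊕ ι → ℤ := Sum.elim a (fun i => c i - idot (n i) m)
  obtain ⟨T, r', z, hr, ht⟩ := exists_tight L r (by
    intro x
    by_cases hx : ∀ j, idot (n j) x ≤ a j
    · obtain ⟨j, hj⟩ := hno x hx
      refine ⟨Sum.inr j, ?_⟩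
      simp only [L, r, Sum.elim_inr, idot_neg]
      rw [idot_sub] at hj
      linarith
    · push Not at hx
      obtain ⟨j, hj⟩ := hx
      exact ⟨Sum.inl j, by simpa [L, r] using hj⟩)
  have hrl : ∀ i, a i ≤ r' (Sum.inl i) := fun i => hr (Sum.inl i)
  have hrr : ∀ i, c i - idot (n i) m ≤ r' (Sum.inr i) := fun i => hr (Sum.inr i)
  have hac : ∀ i, idot (n i) m ≤ a i + c i := by
    intro i
    obtain ⟨e, g, he, hg, h⟩ := H (n i)
    linarith [he i, hg i]
  -- two lower constraints
  have hB : ∃ j₁ j₂, j₁ ≠ j₂ ∧ Sum.inr j₁ ∈ T ∧ Sum.inr j₂ ∈ T := by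
    by_contra hc
    push Not at hc
    obtain ⟨w, hw⟩ : ∃ w : ℤ × ℤ, ∀ j, Sum.inr j ∈ T → n j = w := by
      by_cases hj : ∃ j, Sum.inr j ∈ T
      · obtain ⟨j, hj⟩ := hj
        refine ⟨n j, fun j' hj' => ?_⟩
        by_contra hne
        exact hc j j' (fun h => hne (by rw [h])) hj hj'
      · exact ⟨0, fun j h => absurd ⟨j, h⟩ hj⟩
    obtain ⟨e, g, he, hg, h⟩ := H w
    obtain ⟨k, hk, hlt⟩ := ht.inf e
    rcases k with i | j
    · have := he i
      have := hrl i
      simp only [L, Sum.elim_inl] at hlt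
      linarith
    · have h1 := hw j hk
      have h2 := hg j
      have h3 := hrr j
      simp only [L, Sum.elim_inr, idot_neg] at hlt
      rw [h1] at h2 h3 hlt
      linarith
  have hA : ∃ j₁ j₂, j₁ ≠ j₂ ∧ Sum.inl j₁ ∈ T ∧ Sum.inl j₂ ∈ T := by
    by_contra hc
    push Not at hc
    obtain ⟨w, hw⟩ : ∃ w : ℤ × ℤ, ∀ j, Sum.inl j ∈ T → n j = w := by
      by_cases hj : ∃ j, Sum.inl j ∈ T
      · obtain ⟨j, hj⟩ := hj
        refine ⟨n j, fun j' hj' => ?_⟩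
        by_contra hne
        exact hc j j' (fun h => hne (by rw [h])) hj hj'
      · exact ⟨0, fun j h => absurd ⟨j, h⟩ hj⟩
    obtain ⟨e, g, he, hg, h⟩ := H w
    obtain ⟨k, hk, hlt⟩ := ht.inf (m - g)
    rcases k with i | j
    · have h1 := hw i hk
      have h2 := he i
      have h3 := hrl i
      simp only [L, Sum.elim_inl, idot_sub] at hlt
      rw [h1] at h2 hlt
      linarith
    · have h2 := hg j
      have h3 := hrr j
      simp only [L, Sum.elim_inr, idot_neg, idot_sub] at hlt
      linarith
  obtain ⟨j₁, j₂, hj, hj₁, hj₂⟩ := hB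
  obtain ⟨i₁, i₂, hi, hi₁, hi₂⟩ := hA
  have hll : (Sum.inl i₁ : ι ⊕ ι) ≠ Sum.inl i₂ := by simpa using hi
  have hrr' : (Sum.inr j₁ : ι ⊕ ι) ≠ Sum.inr j₂ := by simpa using hj
  have hlr : ∀ i j, (Sum.inl i : ι ⊕ ι) ≠ Sum.inr j := by simp
  have hE : ∀ j, ∃ e v : ℤ × ℤ, v ≠ 0 ∧ idot (n j) v = 0 ∧
      idot (n i₁) e ≤ r' (Sum.inl i₁) ∧ idot (n i₂) e ≤ r' (Sum.inl i₂) ∧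
      idot (n i₁) (e + v) ≤ r' (Sum.inl i₁) ∧ idot (n i₂) (e + v) ≤ r' (Sum.inl i₂) ∧
      - r' (Sum.inr j) ≤ idot (n j) e := by
    intro j
    obtain ⟨e, v, hv, hv0, h1, h2, h3⟩ := amp j
    exact ⟨e, v, hv, hv0, (h2 _).trans (hrl _), (h2 _).trans (hrl _), (h3 _).trans (hrl _),
      (h3 _).trans (hrl _), by rw [h1]; linarith [hrr j, hac j]⟩
  have eA : ∀ i, Sum.inl i ∈ T → idot (n i) (z (Sum.inl i)) = r' (Sum.inl i) + 1 :=
    fun i hi => ht.eq (Sum.inl i) hi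
  have lA : ∀ i, Sum.inl i ∈ T → ∀ k ∈ T, Sum.inl i ≠ k → idot (n i) (z k) ≤ r' (Sum.inl i) :=
    fun i hi k hk h => ht.le (Sum.inl i) hi k hk h
  have eB : ∀ i, Sum.inr i ∈ T → idot (n i) (z (Sum.inr i)) = - r' (Sum.inr i) - 1 := by
    intro i hi
    have := ht.eq (Sum.inr i) hi
    simp only [L, Sum.elim_inr, idot_neg] at this
    linarith
  have lB : ∀ i, Sum.inr i ∈ T → ∀ k ∈ T, Sum.inr i ≠ k → - r' (Sum.inr i) ≤ idot (n i) (z k) := by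
    intro i hi k hk h
    have := ht.le (Sum.inr i) hi k hk h
    simp only [L, Sum.elim_inr, idot_neg] at this
    linarith
  refine quad (n i₁) (n i₂) (n j₁) (n j₂) (z (Sum.inr j₁)) (z (Sum.inr j₂)) (z (Sum.inl i₁))
    (z (Sum.inl i₂)) (r' (Sum.inl i₁)) (r' (Sum.inl i₂)) (- r' (Sum.inr j₁)) (- r' (Sum.inr j₂))
    (eA _ hi₁) (lA _ hi₁ _ hj₁ (by simp)) (lA _ hi₁ _ hj₂ (by simp)) (lA _ hi₁ _ hi₂ hll)
    (eA _ hi₂) (lA _ hi₂ _ hj₁ (by simp)) (lA _ hi₂ _ hj₂ (by simp)) (lA _ hi₂ _ hi₁ hll.symm)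
    (eB _ hj₁) (lB _ hj₁ _ hi₁ (by simp)) (lB _ hj₁ _ hi₂ (by simp)) (lB _ hj₁ _ hj₂ hrr')
    (eB _ hj₂) (lB _ hj₂ _ hi₁ (by simp)) (lB _ hj₂ _ hi₂ (by simp)) (lB _ hj₂ _ hj₁ hrr'.symm)
    (ht.det_one hj₁ hi₁ hi₂ (by simp) (by simp) hll)
    (ht.det_one hj₁ hi₁ hj₂ (by simp) hrr' (by simp))
    (ht.det_one hj₁ hi₂ hj₂ (by simp) hrr' (by simp))
    (ht.det_one hi₁ hi₂ hj₂ hll (by simp) (by simp))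
    (hE j₁) (hE j₂) ?_
  intro w
  obtain ⟨e, g, he, hg, h⟩ := H w
  refine ⟨e, m - g, (he _).trans (hrl _), (he _).trans (hrl _), ?_, ?_, ?_⟩
  · rw [idot_sub]; linarith [hg j₁, hrr j₁]
  · rw [idot_sub]; linarith [hg j₂, hrr j₂]
  · rw [idot_sub]; linarith


lemma idot_smul (n x : ℤ × ℤ) (k : ℤ) : idot n (k • x) = k * idot n x := by
  simp [idot]; ring

lemma idot_comb (n₁ n₂ x : ℤ × ℤ) (s t : ℤ) :
    idot (s • n₁ + t • n₂) x = s * idot n₁ x + t * idot n₂ x := by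
  simp [idot]; ring

lemma iterate_core {ι : Type} [Fintype ι] (n : ι → ℤ × ℤ) (a c : ι → ℤ)
    (amp : ∀ i, ∃ e v, v ≠ 0 ∧ idot (n i) v = 0 ∧ idot (n i) e = a i ∧
      (∀ j, idot (n j) e ≤ a j) ∧ ∀ j, idot (n j) (e + v) ≤ a j)
    (nef : ∀ i, ∃ g, idot (n i) g = c i ∧ ∀ j, idot (n j) g ≤ c j)
    (fan : ∀ w : ℤ × ℤ, ∃ (e g : ℤ × ℤ) (i j : ι) (s t : ℤ), 0 ≤ s ∧ 0 ≤ t ∧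
      w = s • n i + t • n j ∧ (∀ k, idot (n k) e ≤ a k) ∧ (∀ k, idot (n k) g ≤ c k) ∧
      idot (n i) e = a i ∧ idot (n j) e = a j ∧ idot (n i) g = c i ∧ idot (n j) g = c j) :
    ∀ (q p : ℕ) (m : ℤ × ℤ), (∀ i, idot (n i) m ≤ (p + 1) * a i + q * c i) →
      ∃ lf lg : List (ℤ × ℤ), lf.length = p + 1 ∧ lg.length = q ∧
        (∀ x ∈ lf, ∀ i, idot (n i) x ≤ a i) ∧ (∀ x ∈ lg, ∀ i, idot (n i) x ≤ c i) ∧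
        lf.sum + lg.sum = m := by
  have amp' : ∀ p q : ℕ, ∀ i, ∃ e v, v ≠ 0 ∧ idot (n i) v = 0 ∧
      idot (n i) e = (p + 1) * a i + q * c i ∧
      (∀ j, idot (n j) e ≤ (p + 1) * a j + q * c j) ∧
      ∀ j, idot (n j) (e + v) ≤ (p + 1) * a j + q * c j := by
    intro p q i
    obtain ⟨e, v, hv, h0, h1, h2, h3⟩ := amp i
    obtain ⟨g, g1, g2⟩ := nef i
    have hp : (0 : ℤ) ≤ p := by positivity
    have hq : (0 : ℤ) ≤ q := by positivity
    refine ⟨((p : ℤ) + 1) • e + (q : ℤ) • g, v, hv, h0, ?_, ?_, ?_⟩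
    · rw [idot_add, idot_smul, idot_smul, h1, g1]
    · intro j
      rw [idot_add, idot_smul, idot_smul]
      nlinarith [mul_le_mul_of_nonneg_left (h2 j) hp, h2 j, mul_le_mul_of_nonneg_left (g2 j) hq]
    · intro j
      have := h3 j
      rw [idot_add] at this
      rw [idot_add, idot_add, idot_smul, idot_smul]
      nlinarith [mul_le_mul_of_nonneg_left (h2 j) hp, h2 j, mul_le_mul_of_nonneg_left (g2 j) hq]
  have pt : ∀ (p q : ℕ) (e g : ℤ × ℤ), (∀ k, idot (n k) e ≤ a k) → (∀ k, idot (n k) g ≤ c k) →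
      ∀ k, idot (n k) (((p : ℤ) + 1) • e + (q : ℤ) • g) ≤ (p + 1) * a k + q * c k := by
    intro p q e g he hg k
    have hp : (0 : ℤ) ≤ p := by positivity
    have hq : (0 : ℤ) ≤ q := by positivity
    rw [idot_add, idot_smul, idot_smul]
    nlinarith [mul_le_mul_of_nonneg_left (he k) hp, he k, mul_le_mul_of_nonneg_left (hg k) hq]
  intro q
  induction q with
  | zero =>
    intro p
    induction p with
    | zero =>
      intro m hm
      exact ⟨[m], [], rfl, rfl, by simpa using hm, by simp, by simp⟩
    | succ p ih =>
      intro m hm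
      obtain ⟨x, hx, hx'⟩ := core n (fun i => ((p : ℤ) + 1) * a i + (0 : ℕ) * c i) a m (amp' p 0) (by
        intro w
        obtain ⟨e, g, i, j, s, t, hs, ht, rfl, he, hg, ei, ej, gi, gj⟩ := fan w
        refine ⟨_, e, pt p 0 e g he hg, he, ?_⟩
        rw [← idot_add, idot_comb, idot_comb]
        simp only [idot_add, idot_smul, ei, ej, gi, gj]
        have h1 := mul_le_mul_of_nonneg_left (hm i) hs
        have h2 := mul_le_mul_of_nonneg_left (hm j) ht
        push_cast at h1 h2 ⊢
        linarith)
      obtain ⟨lf, lg, h1, h2, h3, h4, h5⟩ := ih x hx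
      refine ⟨(m - x) :: lf, lg, by simp [h1], h2, ?_, h4, ?_⟩
      · intro y hy
        rcases List.mem_cons.1 hy with rfl | hy
        · exact hx'
        · exact h3 y hy
      · rw [List.sum_cons, add_assoc, h5]; abel
  | succ q ih =>
    intro p m hm
    obtain ⟨x, hx, hx'⟩ := core n (fun i => ((p : ℤ) + 1) * a i + q * c i) c m (amp' p q) (by
      intro w
      obtain ⟨e, g, i, j, s, t, hs, ht, rfl, he, hg, ei, ej, gi, gj⟩ := fan w
      refine ⟨_, g, pt p q e g he hg, hg, ?_⟩
      rw [← idot_add, idot_comb, idot_comb]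
      simp only [idot_add, idot_smul, ei, ej, gi, gj]
      have h1 := mul_le_mul_of_nonneg_left (hm i) hs
      have h2 := mul_le_mul_of_nonneg_left (hm j) ht
      push_cast at h1 h2 ⊢
      linarith)
    obtain ⟨lf, lg, h1, h2, h3, h4, h5⟩ := ih p x hx
    refine ⟨lf, (m - x) :: lg, h1, by simp [h2], h3, ?_, ?_⟩
    · intro y hy
      rcases List.mem_cons.1 hy with rfl | hy
      · exact hx'
      · exact h4 y hy
    · rw [List.sum_cons, ← add_assoc, add_comm lf.sum, add_assoc, h5]; abel

/-! ### Normality of lattice polygons -/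

def pt (z : ℤ × ℤ) : Fin 2 → ℝ := ![(z.1 : ℝ), (z.2 : ℝ)]

lemma pt_add (x y : ℤ × ℤ) : pt (x + y) = pt x + pt y := by
  ext i; fin_cases i <;> simp [pt]

lemma pt_sub (x y : ℤ × ℤ) : pt (x - y) = pt x - pt y := by
  ext i; fin_cases i <;> simp [pt]

lemma pt_inj {x y : ℤ × ℤ} (h : pt x = pt y) : x = y := by
  have h0 := congrFun h 0
  have h1 := congrFun h 1
  simp [pt] at h0 h1
  exact Prod.ext h0 h1

lemma conv3 {C : Set (Fin 2 → ℝ)} (hC : Convex ℝ C) {x y z : Fin 2 → ℝ} (hx : x ∈ C) (hy : y ∈ C)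
    (hz : z ∈ C) {a b c : ℝ} (ha : 0 ≤ a) (hb : 0 ≤ b) (hc : 0 ≤ c) (h : a + b + c = 1) :
    a • x + b • y + c • z ∈ C := by
  have := hC.sum_mem (t := Finset.univ) (w := ![a, b, c]) (z := ![x, y, z])
    (by intro i _; fin_cases i <;> simp [ha, hb, hc]) (by simp [Fin.sum_univ_three, h])
    (by intro i _; fin_cases i <;> simp [hx, hy, hz])
  simpa [Fin.sum_univ_three] using this

def tdet (u v w : ℤ × ℤ) : ℤ := (v.1 - u.1) * (w.2 - u.2) - (v.2 - u.2) * (w.1 - u.1)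

lemma tri_two {C : Set (Fin 2 → ℝ)} (hC : Convex ℝ C) : ∀ (D : ℕ) (v₁ v₂ v₃ y : ℤ × ℤ)
    (l₁ l₂ l₃ : ℝ), (tdet v₁ v₂ v₃).natAbs = D → tdet v₁ v₂ v₃ ≠ 0 → pt v₁ ∈ C → pt v₂ ∈ C →
    pt v₃ ∈ C → 0 ≤ l₁ → 0 ≤ l₂ → 0 ≤ l₃ → l₁ + l₂ + l₃ = 2 →
    pt y = l₁ • pt v₁ + l₂ • pt v₂ + l₃ • pt v₃ →
    ∃ a b, pt a ∈ C ∧ pt b ∈ C ∧ a + b = y := by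
  intro D
  induction D using Nat.strong_induction_on with
  | _ D ih =>
  have key : ∀ (v₁ v₂ v₃ y : ℤ × ℤ)
    (l₁ l₂ l₃ : ℝ), (tdet v₁ v₂ v₃).natAbs = D → tdet v₁ v₂ v₃ ≠ 0 → pt v₁ ∈ C → pt v₂ ∈ C →
    pt v₃ ∈ C → 0 ≤ l₁ → 0 ≤ l₂ → 0 ≤ l₃ → l₁ + l₂ + l₃ = 2 →
    pt y = l₁ • pt v₁ + l₂ • pt v₂ + l₃ • pt v₃ → l₁ ≤ l₂ → l₁ ≤ l₃ →
    ∃ a b, pt a ∈ C ∧ pt b ∈ C ∧ a + b = y := by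
    intro v₁ v₂ v₃ y l₁ l₂ l₃ hD h0 h1 h2 h3 p1 p2 p3 hs hy m2 m3
    by_cases c2 : 1 ≤ l₂
    · refine ⟨v₂, y - v₂, h2, ?_, by abel⟩
      have := conv3 hC h1 h2 h3 p1 (sub_nonneg.2 c2) p3 (by linarith)
      convert this using 1
      rw [pt_sub, hy, sub_smul, one_smul]; abel
    by_cases c3 : 1 ≤ l₃
    · refine ⟨v₃, y - v₃, h3, ?_, by abel⟩
      have := conv3 hC h1 h2 h3 p1 p2 (sub_nonneg.2 c3) (by linarith)
      convert this using 1
      rw [pt_sub, hy, sub_smul, one_smul]; abel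
    push Not at c2 c3
    have q1 : 0 < l₁ := by linarith
    have r1 : 0 < 1 - l₁ := by linarith
    set w := v₁ + v₂ + v₃ - y with hw
    have hpw : pt w = (1 - l₁) • pt v₁ + (1 - l₂) • pt v₂ + (1 - l₃) • pt v₃ := by
      rw [hw, pt_sub, pt_add, pt_add, hy]
      simp only [sub_smul, one_smul]; abel
    have hwC : pt w ∈ C := by
      rw [hpw]
      exact conv3 hC h1 h2 h3 r1.le (by linarith) (by linarith) (by linarith)
    have e0 : (w.1 : ℝ) = (1 - l₁) * v₁.1 + (1 - l₂) * v₂.1 + (1 - l₃) * v₃.1 := by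
      have := congrFun hpw 0
      simpa [pt] using this
    have e1 : (w.2 : ℝ) = (1 - l₁) * v₁.2 + (1 - l₂) * v₂.2 + (1 - l₃) * v₃.2 := by
      have := congrFun hpw 1
      simpa [pt] using this
    have hdet : (tdet w v₂ v₃ : ℝ) = (1 - l₁) * tdet v₁ v₂ v₃ := by
      have hl : l₃ = 2 - l₁ - l₂ := by linarith
      subst hl
      simp only [tdet]
      push_cast
      rw [e0, e1]
      ring
    have hne : tdet w v₂ v₃ ≠ 0 := by
      intro h
      rw [h] at hdet
      push_cast at hdet
      have : (tdet v₁ v₂ v₃ : ℝ) ≠ 0 := by exact_mod_cast h0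
      exact mul_ne_zero r1.ne' this hdet.symm
    have hlt : (tdet w v₂ v₃).natAbs < D := by
      rw [← hD]
      have : |(tdet w v₂ v₃ : ℝ)| < |(tdet v₁ v₂ v₃ : ℝ)| := by
        rw [hdet, abs_mul, abs_of_pos r1]
        have : 0 < |(tdet v₁ v₂ v₃ : ℝ)| := abs_pos.2 (by exact_mod_cast h0)
        nlinarith
      have h' : |tdet w v₂ v₃| < |tdet v₁ v₂ v₃| := by exact_mod_cast this
      rw [Int.abs_eq_natAbs, Int.abs_eq_natAbs] at h'
      exact_mod_cast h'
    have hτ : l₁ / (1 - l₁) * (1 - l₁) = l₁ := div_mul_cancel₀ _ r1.ne'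
    have hτ0 : 0 ≤ l₁ / (1 - l₁) := by positivity
    set τ := l₁ / (1 - l₁)
    have hcmp : ∀ l, l₁ ≤ l → l < 1 → 0 ≤ l - τ * (1 - l) := by
      intro l hl hl1
      have : τ * (1 - l) ≤ τ * (1 - l₁) := mul_le_mul_of_nonneg_left (by linarith) hτ0
      linarith
    refine ih _ hlt w v₂ v₃ y τ (l₂ - τ * (1 - l₂)) (l₃ - τ * (1 - l₃)) rfl hne hwC h2 h3 hτ0
      (hcmp _ m2 c2) (hcmp _ m3 c3) (by nlinarith) ?_
    rw [hpw, hy]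
    nth_rewrite 1 [← hτ]
    module
  intro v₁ v₂ v₃ y l₁ l₂ l₃ hD h0 h1 h2 h3 p1 p2 p3 hs hy
  have d2 : tdet v₂ v₁ v₃ = - tdet v₁ v₂ v₃ := by simp only [tdet]; ring
  have d3 : tdet v₃ v₂ v₁ = - tdet v₁ v₂ v₃ := by simp only [tdet]; ring
  rcases le_total l₁ l₂ with h12 | h12
  · rcases le_total l₁ l₃ with h13 | h13
    · exact key v₁ v₂ v₃ y l₁ l₂ l₃ hD h0 h1 h2 h3 p1 p2 p3 hs hy h12 h13
    · exact key v₃ v₂ v₁ y l₃ l₂ l₁ (by rw [d3]; simpa using hD) (by rw [d3]; simpa using h0)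
        h3 h2 h1 p3 p2 p1 (by linarith) (by rw [hy]; abel) (by linarith) h13
  · rcases le_total l₂ l₃ with h13 | h13
    · exact key v₂ v₁ v₃ y l₂ l₁ l₃ (by rw [d2]; simpa using hD) (by rw [d2]; simpa using h0)
        h2 h1 h3 p2 p1 p3 (by linarith) (by rw [hy]; abel) h12 h13
    · exact key v₃ v₂ v₁ y l₃ l₂ l₁ (by rw [d3]; simpa using hD) (by rw [d3]; simpa using h0)
        h3 h2 h1 p3 p2 p1 (by linarith) (by rw [hy]; abel) h13 (by linarith)

lemma tdet_ne {v : Fin 3 → ℤ × ℤ} (h : AffineIndependent ℝ (fun i => pt (v i))) :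
    tdet (v 0) (v 1) (v 2) ≠ 0 := by
  intro h0
  have hli := affineIndependent_iff.1 h Finset.univ
  have h0' : (tdet (v 0) (v 1) (v 2) : ℝ) = 0 := by exact_mod_cast h0
  simp only [tdet] at h0'
  push_cast at h0'
  have k0 := hli ![((v 1).1 - (v 2).1 : ℝ), (v 2).1 - (v 0).1, (v 0).1 - (v 1).1]
    (by simp [Fin.sum_univ_three]) (by
      ext i; fin_cases i <;> simp [Fin.sum_univ_three, pt] <;> linarith)
  have k1 := hli ![((v 1).2 - (v 2).2 : ℝ), (v 2).2 - (v 0).2, (v 0).2 - (v 1).2]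
    (by simp [Fin.sum_univ_three]) (by
      ext i; fin_cases i <;> simp [Fin.sum_univ_three, pt] <;> linarith)
  have a0 := k0 2 (by simp)
  have a1 := k1 2 (by simp)
  simp only [Matrix.cons_val] at a0 a1
  have := h.injective (a₁ := 0) (a₂ := 1) (by
    ext i; fin_cases i
    · exact sub_eq_zero.1 a0
    · exact sub_eq_zero.1 a1)
  simp at this

lemma poly_normal_aux {C : Set (Fin 2 → ℝ)} (hC : Convex ℝ C) {ι : Type} [Fintype ι]
    (z : ι → ℤ × ℤ) (hz : AffineIndependent ℝ (fun i => pt (z i))) (hzC : ∀ i, pt (z i) ∈ C) :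
    ∀ (n : ℕ) (l : ι → ℝ) (y : ℤ × ℤ), (∀ i, 0 ≤ l i) → ∑ i, l i = n →
      pt y = ∑ i, l i • pt (z i) →
      ∃ L : List (ℤ × ℤ), L.length = n ∧ (∀ x ∈ L, pt x ∈ C) ∧ L.sum = y := by
  classical
  intro n
  induction n with
  | zero =>
    intro l y hl hs hy
    refine ⟨[], rfl, by simp, ?_⟩
    have : ∀ i, l i = 0 := by
      have := (Finset.sum_eq_zero_iff_of_nonneg (s := Finset.univ) (f := l) (fun i _ => hl i)).1
        (by simpa using hs)
      intro i; exact this i (Finset.mem_univ i)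
    apply pt_inj
    rw [hy]
    simp only [this]
    ext i; fin_cases i <;> simp [pt]
  | succ n ih =>
    intro l y hl hs hy
    by_cases hbig : ∃ i, 1 ≤ l i
    · obtain ⟨i, hi⟩ := hbig
      obtain ⟨L, h1, h2, h3⟩ := ih (fun j => l j - if j = i then 1 else 0) (y - z i) (by
          intro j
          by_cases hj : j = i
          · subst hj; simp [hi]
          · simp [hj, hl j])
        (by rw [Finset.sum_sub_distrib, hs]; simp)
        (by rw [pt_sub, hy]; simp [sub_smul, Finset.sum_sub_distrib])
      refine ⟨z i :: L, by simp [h1], ?_, by rw [List.sum_cons, h3]; abel⟩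
      intro x hx
      rcases List.mem_cons.1 hx with rfl | hx
      · exact hzC i
      · exact h2 x hx
    push Not at hbig
    have hne : (Finset.univ : Finset ι).Nonempty := by
      by_contra h
      rw [Finset.not_nonempty_iff_eq_empty] at h
      rw [h] at hs
      simp at hs
      have : (0:ℝ) < n + 1 := by positivity
      linarith
    have hcard : ((n + 1 : ℕ) : ℝ) < Fintype.card ι := by
      rw [← hs]
      calc _ < ∑ i : ι, (1 : ℝ) := Finset.sum_lt_sum_of_nonempty hne (fun i _ => hbig i)
        _ = _ := by simp
    have hcard' : n + 1 < Fintype.card ι := by exact_mod_cast hcard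
    have h3 : Fintype.card ι ≤ 3 := by
      have := hz.card_le_finrank_succ
      have h2 := Submodule.finrank_le (vectorSpan ℝ (Set.range fun i => pt (z i)))
      simp at h2
      omega
    obtain rfl | rfl : n = 0 ∨ n = 1 := by omega
    · refine ⟨[y], rfl, ?_, by simp⟩
      intro x hx
      rw [List.mem_singleton.1 hx, hy]
      exact hC.sum_mem (fun i _ => hl i) (by simpa using hs) (fun i _ => hzC i)
    · have hc : Fintype.card ι = 3 := by omega
      let e := (Fintype.equivFinOfCardEq hc).symm
      have hz' : AffineIndependent ℝ (fun i => pt ((z ∘ e) i)) := hz.comp_embedding e.toEmbedding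
      have hd := tdet_ne hz'
      rw [← e.sum_comp, Fin.sum_univ_three] at hs hy
      obtain ⟨a, b, ha, hb, hab⟩ := tri_two hC _ _ _ _ y _ _ _ rfl hd (hzC _) (hzC _) (hzC _)
        (hl _) (hl _) (hl _) (by rw [hs]; norm_num) hy
      refine ⟨[a, b], rfl, ?_, by simpa using hab⟩
      simp [ha, hb]

lemma IsLatticePt.exists_pt {x : Fin 2 → ℝ} (h : IsLatticePt x) : ∃ z, x = pt z := by
  obtain ⟨a, ha⟩ := h 0
  obtain ⟨b, hb⟩ := h 1
  refine ⟨(a, b), ?_⟩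
  ext i; fin_cases i <;> simp [pt, ha, hb]

lemma isLatticePt_pt (z : ℤ × ℤ) : IsLatticePt (pt z) := by
  intro i; fin_cases i
  · exact ⟨z.1, rfl⟩
  · exact ⟨z.2, rfl⟩

lemma poly_normal {V : Finset (Fin 2 → ℝ)} (hV : ∀ v ∈ V, IsLatticePt v) (n : ℕ) (y : ℤ × ℤ)
    (x : Fin 2 → ℝ) (hx : x ∈ convexHull ℝ (V : Set (Fin 2 → ℝ))) (hy : pt y = (n : ℝ) • x) :
    ∃ L : List (ℤ × ℤ), L.length = n ∧ (∀ x ∈ L, pt x ∈ convexHull ℝ (V : Set (Fin 2 → ℝ))) ∧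
      L.sum = y := by
  obtain ⟨ι, _, z, w, hz, hind, hw, hs, hx⟩ := eq_pos_convex_span_of_mem_convexHull hx
  have : ∀ i, ∃ u, z i = pt u := fun i => (hV _ (hz ⟨i, rfl⟩)).exists_pt
  choose u hu using this
  have hzu : z = fun i => pt (u i) := funext hu
  have hz' : ∀ i, pt (u i) ∈ convexHull ℝ (V : Set (Fin 2 → ℝ)) := fun i =>
    subset_convexHull ℝ _ (by rw [← hu]; exact hz ⟨i, rfl⟩)
  refine poly_normal_aux (convex_convexHull ℝ _) u (hzu ▸ hind) hz' n (fun i => n * w i) y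
    (fun i => by have := (hw i).le; positivity) (by rw [← Finset.mul_sum, hs, mul_one]) ?_
  rw [hy, ← hx, Finset.smul_sum]
  simp only [hu, mul_smul]

/-! ### From real polygons to integer inequalities -/

lemma dot2_eq (x y : Fin 2 → ℝ) : dot2 x y = x 0 * y 0 + x 1 * y 1 := by
  simp [dot2, Fin.sum_univ_two]

lemma dot2_pt (n x : ℤ × ℤ) : dot2 (pt x) (pt n) = (idot n x : ℤ) := by
  simp [dot2_eq, pt, idot]; ring

lemma exists_extreme_max {F : Set (Fin 2 → ℝ)} (hF : IsCompact F) (hne : F.Nonempty)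
    (w : Fin 2 → ℝ) : ∃ u ∈ Set.extremePoints ℝ F, w ∈ normalCone F u := by
  let l : (Fin 2 → ℝ) →L[ℝ] ℝ := w 0 • ContinuousLinearMap.proj 0 + w 1 • ContinuousLinearMap.proj 1
  have hl : ∀ x, l x = dot2 x w := by
    intro x; simp [l, dot2_eq]; ring
  have hexp : IsExposed ℝ F (l.toExposed F) := ContinuousLinearMap.toExposed.isExposed
  obtain ⟨x, hx, hmax⟩ := hF.exists_isMaxOn hne l.continuous.continuousOn
  have hne' : (l.toExposed F).Nonempty := ⟨x, hx, fun y hy => hmax hy⟩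
  obtain ⟨u, hu⟩ := (hexp.isCompact hF).extremePoints_nonempty hne'
  refine ⟨u, hexp.isExtreme.extremePoints_subset_extremePoints hu, ?_⟩
  intro y hy
  have := hu.1.2 y hy
  rwa [hl, hl] at this

/-- The two primitive outer normals at a vertex of a smooth polygon. -/
lemma vertex_data {F : Set (Fin 2 → ℝ)} (hF : IsSmoothPolygon F) {u : Fin 2 → ℝ}
    (hu : u ∈ Set.extremePoints ℝ F) :
    ∃ N : Bool → ℤ × ℤ, (∀ b, pt (N b) ∈ normalCone F u) ∧
      (∀ w ∈ normalCone F u, ∃ s t : ℝ, 0 ≤ s ∧ 0 ≤ t ∧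
        w = s • pt (N true) + t • pt (N false)) ∧
      (∀ w : ℤ × ℤ, pt w ∈ normalCone F u → ∃ s t : ℤ, 0 ≤ s ∧ 0 ≤ t ∧
        w = s • N true + t • N false) ∧
      (∀ b, ∃ x ∈ F, x ≠ u ∧ dot2 x (pt (N b)) = dot2 u (pt (N b))) := by
  obtain ⟨m₁, m₂, hδ, hcone⟩ := hF u hu
  obtain ⟨δ, hδ2, hdet⟩ : ∃ δ : ℤ, δ * δ = 1 ∧ m₁ 0 * m₂ 1 - m₁ 1 * m₂ 0 = δ := by
    rcases hδ with h | h
    · exact ⟨1, by norm_num, h⟩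
    · exact ⟨-1, by norm_num, h⟩
  have hdetR : (m₁ 0 : ℝ) * m₂ 1 - m₁ 1 * m₂ 0 = δ := by exact_mod_cast hdet
  have hδR : (δ : ℝ) * δ = 1 := by exact_mod_cast hδ2
  -- elements of the cone
  have hx : ∀ x ∈ F, ∃ a b : ℝ, 0 ≤ a ∧ 0 ≤ b ∧ x 0 - u 0 = a * m₁ 0 + b * m₂ 0 ∧
      x 1 - u 1 = a * m₁ 1 + b * m₂ 1 := by
    intro x hx
    have : x - u ∈ {y : Fin 2 → ℝ | ∃ t : ℝ, ∃ x ∈ F, 0 ≤ t ∧ y = t • (x - u)} :=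
      ⟨1, x, hx, zero_le_one, by simp⟩
    rw [hcone] at this
    obtain ⟨a, b, ha, hb, h⟩ := this
    exact ⟨a, b, ha, hb, by simpa using congrFun h 0, by simpa using congrFun h 1⟩
  have hm₁ : ∃ t : ℝ, ∃ x ∈ F, 0 ≤ t ∧ (m₁ 0 : ℝ) = t * (x 0 - u 0) ∧
      (m₁ 1 : ℝ) = t * (x 1 - u 1) := by
    have : (fun i => (m₁ i : ℝ)) ∈ {y : Fin 2 → ℝ | ∃ a b : ℝ, 0 ≤ a ∧ 0 ≤ b ∧
        y = a • (fun i => (m₁ i : ℝ)) + b • (fun i => (m₂ i : ℝ))} :=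
      ⟨1, 0, by norm_num, le_refl _, by simp⟩
    rw [← hcone] at this
    obtain ⟨t, x, hx, ht, h⟩ := this
    exact ⟨t, x, hx, ht, by simpa using congrFun h 0, by simpa using congrFun h 1⟩
  have hm₂ : ∃ t : ℝ, ∃ x ∈ F, 0 ≤ t ∧ (m₂ 0 : ℝ) = t * (x 0 - u 0) ∧
      (m₂ 1 : ℝ) = t * (x 1 - u 1) := by
    have : (fun i => (m₂ i : ℝ)) ∈ {y : Fin 2 → ℝ | ∃ a b : ℝ, 0 ≤ a ∧ 0 ≤ b ∧
        y = a • (fun i => (m₁ i : ℝ)) + b • (fun i => (m₂ i : ℝ))} :=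
      ⟨0, 1, le_refl _, by norm_num, by simp⟩
    rw [← hcone] at this
    obtain ⟨t, x, hx, ht, h⟩ := this
    exact ⟨t, x, hx, ht, by simpa using congrFun h 0, by simpa using congrFun h 1⟩
  obtain ⟨t₁, x₁, hx₁, ht₁, p10, p11⟩ := hm₁
  obtain ⟨t₂, x₂, hx₂, ht₂, p20, p21⟩ := hm₂
  -- sign of pairings with normal vectors
  have hneg₁ : ∀ w ∈ normalCone F u, w 0 * m₁ 0 + w 1 * m₁ 1 ≤ 0 := by
    intro w hw
    have := hw x₁ hx₁
    rw [dot2_eq, dot2_eq] at this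
    rw [p10, p11]
    nlinarith [mul_nonneg ht₁ (sub_nonneg.2 this)]
  have hneg₂ : ∀ w ∈ normalCone F u, w 0 * m₂ 0 + w 1 * m₂ 1 ≤ 0 := by
    intro w hw
    have := hw x₂ hx₂
    rw [dot2_eq, dot2_eq] at this
    rw [p20, p21]
    nlinarith [mul_nonneg ht₂ (sub_nonneg.2 this)]
  let n₁ : ℤ × ℤ := (-δ * m₂ 1, δ * m₂ 0)
  let n₂ : ℤ × ℤ := (δ * m₁ 1, -δ * m₁ 0)
  refine ⟨fun b => cond b n₁ n₂, ?_, ?_, ?_, ?_⟩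
  · intro b x hxF
    obtain ⟨a, c, ha, hc, h0, h1⟩ := hx x hxF
    have e0 : x 0 = u 0 + a * m₁ 0 + c * m₂ 0 := by linarith
    have e1 : x 1 = u 1 + a * m₁ 1 + c * m₂ 1 := by linarith
    rw [dot2_eq, dot2_eq, e0, e1]
    cases b
    · simp only [cond_false, n₂, pt, Matrix.cons_val]
      push_cast
      have : c * (δ * ((m₁ 0 : ℝ) * m₂ 1 - m₁ 1 * m₂ 0)) = c := by rw [hdetR, hδR, mul_one]
      nlinarith
    · simp only [cond_true, n₁, pt, Matrix.cons_val]
      push_cast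
      have : a * (δ * ((m₁ 0 : ℝ) * m₂ 1 - m₁ 1 * m₂ 0)) = a := by rw [hdetR, hδR, mul_one]
      nlinarith
  · intro w hw
    refine ⟨-(w 0 * m₁ 0 + w 1 * m₁ 1), -(w 0 * m₂ 0 + w 1 * m₂ 1), by linarith [hneg₁ w hw],
      by linarith [hneg₂ w hw], ?_⟩
    have k : (δ : ℝ) * ((m₁ 0 : ℝ) * m₂ 1 - m₁ 1 * m₂ 0) = 1 := by rw [hdetR, hδR]
    ext i; fin_cases i
    · simp [n₁, n₂, pt]
      linear_combination (-w 0) * k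
    · simp [n₁, n₂, pt]
      linear_combination (-w 1) * k
  · intro w hw
    have h1 : w.1 * m₁ 0 + w.2 * m₁ 1 ≤ 0 := by
      have := hneg₁ _ hw; simp [pt] at this; exact_mod_cast this
    have h2 : w.1 * m₂ 0 + w.2 * m₂ 1 ≤ 0 := by
      have := hneg₂ _ hw; simp [pt] at this; exact_mod_cast this
    refine ⟨-(w.1 * m₁ 0 + w.2 * m₁ 1), -(w.1 * m₂ 0 + w.2 * m₂ 1), by linarith,
      by linarith, ?_⟩
    have k : δ * (m₁ 0 * m₂ 1 - m₁ 1 * m₂ 0) = 1 := by rw [hdet, hδ2]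
    ext
    · simp [n₁, n₂]
      linear_combination (-w.1) * k
    · simp [n₁, n₂]
      linear_combination (-w.2) * k
  · have hne : ∀ x : Fin 2 → ℝ, ∀ m : Fin 2 → ℤ, ∀ t : ℝ, (m 0 : ℝ) = t * (x 0 - u 0) →
        (m 1 : ℝ) = t * (x 1 - u 1) → (m 0 ≠ 0 ∨ m 1 ≠ 0) → x ≠ u := by
      rintro x m t h0 h1 h rfl
      simp at h0 h1
      omega
    have hz : ∀ x : Fin 2 → ℝ, ∀ m : Fin 2 → ℤ, ∀ t : ℝ, (m 0 : ℝ) = t * (x 0 - u 0) →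
        (m 1 : ℝ) = t * (x 1 - u 1) → (m 0 ≠ 0 ∨ m 1 ≠ 0) → t ≠ 0 := by
      rintro x m t h0 h1 h rfl
      simp at h0 h1
      omega
    have hδ0 : δ ≠ 0 := by rintro rfl; simp at hδ2
    have hm1 : m₁ 0 ≠ 0 ∨ m₁ 1 ≠ 0 := by
      by_contra h
      push Not at h
      rw [h.1, h.2] at hdet
      apply hδ0; rw [← hdet]; ring
    have hm2 : m₂ 0 ≠ 0 ∨ m₂ 1 ≠ 0 := by
      by_contra h
      push Not at h
      rw [h.1, h.2] at hdet
      apply hδ0; rw [← hdet]; ring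
    intro b
    cases b
    · refine ⟨x₁, hx₁, hne _ _ _ p10 p11 hm1, ?_⟩
      have ht := hz _ _ _ p10 p11 hm1
      rw [dot2_eq, dot2_eq]
      simp only [cond_false, n₂, pt, Matrix.cons_val]
      push_cast
      rw [p10, p11]
      ring
    · refine ⟨x₂, hx₂, hne _ _ _ p20 p21 hm2, ?_⟩
      rw [dot2_eq, dot2_eq]
      simp only [cond_true, n₁, pt, Matrix.cons_val]
      push_cast
      rw [p20, p21]
      ring

lemma dot2_sum_left {s : Finset (Fin 2 → ℝ)} (w : (Fin 2 → ℝ) → ℝ) (n : Fin 2 → ℝ) :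
    dot2 (∑ y ∈ s, w y • y) n = ∑ y ∈ s, w y * dot2 y n := by
  simp only [dot2_eq, Finset.sum_apply, Pi.smul_apply, smul_eq_mul, Finset.sum_mul]
  rw [← Finset.sum_add_distrib]
  refine Finset.sum_congr rfl fun y _ => by ring

/-- An edge direction contains a second lattice vertex. -/
lemma exists_second {V : Finset (Fin 2 → ℝ)} {u n x : Fin 2 → ℝ}
    (hn : n ∈ normalCone (convexHull ℝ (V : Set (Fin 2 → ℝ))) u)
    (hx : x ∈ convexHull ℝ (V : Set (Fin 2 → ℝ))) (hxu : x ≠ u) (h : dot2 x n = dot2 u n) :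
    ∃ v ∈ V, v ≠ u ∧ dot2 v n = dot2 u n := by
  by_contra hcon
  push Not at hcon
  obtain ⟨w, hw, hs, hsum⟩ := Finset.mem_convexHull'.1 hx
  have hle : ∀ v ∈ V, dot2 v n ≤ dot2 u n := fun v hv => hn v (subset_convexHull ℝ _ hv)
  have h0 : ∑ y ∈ V, w y * (dot2 u n - dot2 y n) = 0 := by
    simp only [mul_sub, Finset.sum_sub_distrib]
    rw [← Finset.sum_mul, hs, ← dot2_sum_left, hsum, h]; ring
  have h1 := (Finset.sum_eq_zero_iff_of_nonneg
    (fun y hy => mul_nonneg (hw y hy) (sub_nonneg.2 (hle y hy)))).1 h0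
  have h2 : ∀ y ∈ V, w y • y = w y • u := by
    intro y hy
    by_cases hyu : y = u
    · rw [hyu]
    · have := hcon y hy hyu
      rcases mul_eq_zero.1 (h1 y hy) with h | h
      · simp [h]
      · exact absurd (by linarith) this
  apply hxu
  rw [← hsum, Finset.sum_congr rfl h2, ← Finset.sum_smul, hs, one_smul]

/-- A lattice vertex of `G` maximizing two normals that have a common maximizer. -/
lemma exists_common {V : Finset (Fin 2 → ℝ)} (hne : V.Nonempty) {v n₁ n₂ : Fin 2 → ℝ}
    (hv : v ∈ convexHull ℝ (V : Set (Fin 2 → ℝ)))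
    (h₁ : n₁ ∈ normalCone (convexHull ℝ (V : Set (Fin 2 → ℝ))) v)
    (h₂ : n₂ ∈ normalCone (convexHull ℝ (V : Set (Fin 2 → ℝ))) v) :
    ∃ g ∈ V, n₁ ∈ normalCone (convexHull ℝ (V : Set (Fin 2 → ℝ))) g ∧
      n₂ ∈ normalCone (convexHull ℝ (V : Set (Fin 2 → ℝ))) g := by
  obtain ⟨g, hg, hmax⟩ := V.exists_max_image (fun y => dot2 y (n₁ + n₂)) hne
  have hsplit : ∀ y, dot2 y (n₁ + n₂) = dot2 y n₁ + dot2 y n₂ := by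
    intro y; simp only [dot2_eq, Pi.add_apply]; ring
  obtain ⟨w, hw, hs, hsum⟩ := Finset.mem_convexHull'.1 hv
  have hvg : dot2 v (n₁ + n₂) ≤ dot2 g (n₁ + n₂) := by
    rw [← hsum, dot2_sum_left]
    calc _ ≤ ∑ y ∈ V, w y * dot2 g (n₁ + n₂) :=
          Finset.sum_le_sum fun y hy => mul_le_mul_of_nonneg_left (hmax y hy) (hw y hy)
      _ = _ := by rw [← Finset.sum_mul, hs, one_mul]
  rw [hsplit, hsplit] at hvg
  have g1 := h₁ g (subset_convexHull ℝ _ hg)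
  have g2 := h₂ g (subset_convexHull ℝ _ hg)
  exact ⟨g, hg, fun x hx => (h₁ x hx).trans (by linarith), fun x hx => (h₂ x hx).trans (by linarith)⟩

lemma polygon_split {VF VG : Finset (Fin 2 → ℝ)} (hVF : VF.Nonempty) (hVG : VG.Nonempty)
    (lF : ∀ v ∈ VF, IsLatticePt v) (lG : ∀ v ∈ VG, IsLatticePt v)
    (hsm : IsSmoothPolygon (convexHull ℝ (VF : Set (Fin 2 → ℝ))))
    (href : FanRefines (convexHull ℝ (VF : Set (Fin 2 → ℝ))) (convexHull ℝ (VG : Set (Fin 2 → ℝ))))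
    (p q : ℕ) (m : ℤ × ℤ) (f g : Fin 2 → ℝ) (hf : f ∈ convexHull ℝ (VF : Set (Fin 2 → ℝ)))
    (hg : g ∈ convexHull ℝ (VG : Set (Fin 2 → ℝ))) (hm : pt m = (p : ℝ) • f + (q : ℝ) • g) :
    ∃ lf lg : List (ℤ × ℤ), lf.length = p ∧ lg.length = q ∧
      (∀ x ∈ lf, pt x ∈ convexHull ℝ (VF : Set (Fin 2 → ℝ))) ∧
      (∀ x ∈ lg, pt x ∈ convexHull ℝ (VG : Set (Fin 2 → ℝ))) ∧ lf.sum + lg.sum = m := by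
  obtain _ | p := p
  · obtain ⟨L, h1, h2, h3⟩ := poly_normal lG q m g hg (by simpa using hm)
    exact ⟨[], L, rfl, h1, by simp, h2, by simpa using h3⟩
  set F := convexHull ℝ (VF : Set (Fin 2 → ℝ)) with hFdef
  set G := convexHull ℝ (VG : Set (Fin 2 → ℝ)) with hGdef
  have hFc : IsCompact F := VF.finite_toSet.isCompact_convexHull (𝕜 := ℝ)
  have hGc : IsCompact G := VG.finite_toSet.isCompact_convexHull (𝕜 := ℝ)
  have hFne : F.Nonempty := ⟨f, hf⟩
  let E := Set.extremePoints ℝ F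
  have hEV : E ⊆ VF := extremePoints_convexHull_subset
  have hEfin : E.Finite := VF.finite_toSet.subset hEV
  haveI : Fintype E := hEfin.fintype
  have hz : ∀ u : E, ∃ z, (u : Fin 2 → ℝ) = pt z := fun u => (lF u (hEV u.2)).exists_pt
  choose z hz using hz
  have hN := fun u : E => vertex_data hsm u.2
  choose N hN1 hN2 hN3 hN4 using hN
  have hgam : ∀ u : E, ∃ y : ℤ × ℤ, pt y ∈ G ∧ ∀ b, pt (N u b) ∈ normalCone G (pt y) := by
    intro u
    obtain ⟨v, hv, hsub⟩ := href u u.2.1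
    obtain ⟨y, hy, h1, h2⟩ := exists_common hVG hv (hsub (hN1 u true)) (hsub (hN1 u false))
    obtain ⟨y', rfl⟩ := (lG y hy).exists_pt
    exact ⟨y', subset_convexHull ℝ _ hy, fun b => by cases b <;> assumption⟩
  choose γ hγG hγ using hgam
  have hzF : ∀ u, pt (z u) ∈ F := fun u => hz u ▸ u.2.1
  have hzN : ∀ u b, pt (N u b) ∈ normalCone F (pt (z u)) := fun u b => hz u ▸ hN1 u b
  -- membership test
  have mem : ∀ (B : Set (Fin 2 → ℝ)) (y : E → ℤ × ℤ), Convex ℝ B → IsClosed B → (∀ u, pt (y u) ∈ B) →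
      ∀ x, (∀ u b, idot (N u b) x ≤ idot (N u b) (y u)) → pt x ∈ B := by
    intro B y hBc hBcl hyB x hx
    by_contra hxB
    obtain ⟨l, r, hl, hr⟩ := geometric_hahn_banach_closed_point hBc hBcl hxB
    let w : Fin 2 → ℝ := ![l (Pi.single 0 1), l (Pi.single 1 1)]
    have hlw : ∀ v, l v = dot2 v w := by
      intro v
      have : v = v 0 • Pi.single 0 1 + v 1 • Pi.single 1 1 := by
        ext i; fin_cases i <;> simp
      conv_lhs => rw [this]
      simp [dot2_eq, w]
    obtain ⟨u, hu, hwu⟩ := exists_extreme_max hFc hFne w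
    obtain ⟨s, t, hs, ht, hst⟩ := hN2 ⟨u, hu⟩ w hwu
    have hcomb : ∀ v, dot2 v w = s * dot2 v (pt (N ⟨u, hu⟩ true)) +
        t * dot2 v (pt (N ⟨u, hu⟩ false)) := by
      intro v; rw [hst]; simp only [dot2_eq, Pi.add_apply, Pi.smul_apply, smul_eq_mul]; ring
    have h1 := hl _ (hyB ⟨u, hu⟩)
    rw [hlw, hcomb] at h1 hr
    simp only [dot2_pt] at h1 hr
    have k1 : (idot (N ⟨u, hu⟩ true) x : ℝ) ≤ idot (N ⟨u, hu⟩ true) (y ⟨u, hu⟩) := by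
      exact_mod_cast hx _ _
    have k2 : (idot (N ⟨u, hu⟩ false) x : ℝ) ≤ idot (N ⟨u, hu⟩ false) (y ⟨u, hu⟩) := by
      exact_mod_cast hx _ _
    linarith [mul_le_mul_of_nonneg_left k1 hs, mul_le_mul_of_nonneg_left k2 ht]
  have boundF : ∀ x, pt x ∈ F → ∀ i : E × Bool, idot (N i.1 i.2) x ≤ idot (N i.1 i.2) (z i.1) := by
    intro x hx i
    have := hzN i.1 i.2 _ hx
    rw [dot2_pt, dot2_pt] at this
    exact_mod_cast this
  have boundG : ∀ x, pt x ∈ G → ∀ i : E × Bool, idot (N i.1 i.2) x ≤ idot (N i.1 i.2) (γ i.1) := by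
    intro x hx i
    have := hγ i.1 i.2 _ hx
    rw [dot2_pt, dot2_pt] at this
    exact_mod_cast this
  obtain ⟨lf, lg, h1, h2, h3, h4, h5⟩ := iterate_core (ι := E × Bool) (fun i => N i.1 i.2)
    (fun i => idot (N i.1 i.2) (z i.1)) (fun i => idot (N i.1 i.2) (γ i.1))
    (by
      intro i
      obtain ⟨x, hx, hxu, hxd⟩ := hN4 i.1 i.2
      obtain ⟨v, hv, hvu, hvd⟩ := exists_second (hN1 i.1 i.2) hx hxu hxd
      obtain ⟨v', rfl⟩ := (lF v hv).exists_pt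
      rw [hz i.1] at hvd hvu
      rw [dot2_pt, dot2_pt] at hvd
      have hvd' : idot (N i.1 i.2) v' = idot (N i.1 i.2) (z i.1) := by exact_mod_cast hvd
      refine ⟨z i.1, v' - z i.1, ?_, ?_, rfl, boundF _ (hzF _), ?_⟩
      · intro h; exact hvu (by rw [sub_eq_zero.1 h])
      · rw [idot_sub, hvd', sub_self]
      · intro j
        rw [add_sub_cancel]
        exact boundF _ (subset_convexHull ℝ _ hv) j)
    (by
      intro i
      exact ⟨γ i.1, rfl, boundG _ (hγG _)⟩)
    (by
      intro w
      obtain ⟨u, hu, hwu⟩ := exists_extreme_max hFc hFne (pt w)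
      obtain ⟨s, t, hs, ht, hst⟩ := hN3 ⟨u, hu⟩ w hwu
      exact ⟨z ⟨u, hu⟩, γ ⟨u, hu⟩, (⟨u, hu⟩, true), (⟨u, hu⟩, false), s, t, hs, ht, hst,
        boundF _ (hzF _), boundG _ (hγG _), rfl, rfl, rfl, rfl⟩)
    q p m (by
      intro i
      have a1 := hzN i.1 i.2 f hf
      have a2 := hγ i.1 i.2 g hg
      rw [dot2_pt] at a1 a2
      have : (idot (N i.1 i.2) m : ℝ) = (p + 1) * dot2 f (pt (N i.1 i.2)) +
          q * dot2 g (pt (N i.1 i.2)) := by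
        rw [← dot2_pt, hm]
        simp only [dot2_eq, Pi.add_apply, Pi.smul_apply, smul_eq_mul]
        push_cast; ring
      have : (idot (N i.1 i.2) m : ℝ) ≤ (p + 1) * idot (N i.1 i.2) (z i.1) +
          q * idot (N i.1 i.2) (γ i.1) := by
        rw [this]; gcongr
      exact_mod_cast this)
  refine ⟨lf, lg, h1, h2, ?_, ?_, h5⟩
  · exact fun x hx => mem F z (convex_convexHull ℝ _) hFc.isClosed hzF x
      fun u b => h3 x hx (u, b)
  · exact fun x hx => mem G γ (convex_convexHull ℝ _) hGc.isClosed hγG x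
      fun u b => h4 x hx (u, b)

lemma sum_emb (l : List (ℤ × ℤ)) (t : ℝ) :
    (l.map fun z => emb (pt z) t).sum = emb (pt l.sum) (l.length * t) := by
  induction l with
  | nil => ext i; fin_cases i <;> simp [emb, pt]
  | cons a l ih =>
    rw [List.map_cons, List.sum_cons, ih, List.sum_cons, pt_add]
    ext i; fin_cases i <;> simp [emb]
    ring

lemma emb_lattice (z : ℤ × ℤ) (t : ℝ) (k : ℤ) (h : t = k) : IsLatticePt (emb (pt z) t) := by
  intro i; fin_cases i
  · exact ⟨z.1, rfl⟩
  · exact ⟨z.2, rfl⟩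
  · exact ⟨k, h⟩

/-- Cayley polytopes of an ample/nef pair of polygons on a smooth toric surface are normal. -/
theorem stmt3 (F G : Set (Fin 2 → ℝ))
    (hF : IsLatticePolytope F) (hG : IsLatticePolytope G)
    (hFdim : (interior F).Nonempty) (hFsm : IsSmoothPolygon F)
    (href : FanRefines F G) :
    IsNormalPolytope (cayley F G) := by
  obtain ⟨VF, hVF, lF, rfl⟩ := hF
  obtain ⟨VG, hVG, lG, rfl⟩ := hG
  set F := convexHull ℝ (VF : Set (Fin 2 → ℝ)) with hFdef
  set G := convexHull ℝ (VG : Set (Fin 2 → ℝ)) with hGdef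
  have hFne : F.Nonempty := hVF.to_set.convexHull
  have hGne : G.Nonempty := hVG.to_set.convexHull
  intro n hn x hx hxl
  obtain ⟨c, hc, rfl⟩ := hx
  have hlin : ∀ t : ℝ, ∀ B : Set (Fin 2 → ℝ), Convex ℝ B → Convex ℝ ((fun v => emb v t) '' B) := by
    rintro t B hB _ ⟨a, ha, rfl⟩ _ ⟨b, hb, rfl⟩ r s hr hs hrs
    refine ⟨r • a + s • b, hB ha hb hr hs hrs, ?_⟩
    ext i; fin_cases i <;> simp [emb]
    rw [← add_mul, hrs, one_mul]
  have hc' := hc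
  rw [cayley, (hlin 0 F (convex_convexHull ℝ _)).convexHull_union
    (hlin 1 G (convex_convexHull ℝ _)) (hFne.image _) (hGne.image _), mem_convexJoin] at hc'
  obtain ⟨_, ⟨f, hf, rfl⟩, _, ⟨g, hg, rfl⟩, r, s, hr, hs, hrs, rfl⟩ := hc'
  have hn0 : (0 : ℝ) < n := by exact_mod_cast hn
  have c0 : ((n : ℝ) • (r • emb f 0 + s • emb g 1)) 0 = n * r * f 0 + n * s * g 0 := by
    simp [emb]; ring
  have c1 : ((n : ℝ) • (r • emb f 0 + s • emb g 1)) 1 = n * r * f 1 + n * s * g 1 := by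
    simp [emb]; ring
  have c2 : ((n : ℝ) • (r • emb f 0 + s • emb g 1)) 2 = n * s := by
    simp [emb]
  obtain ⟨k, hk⟩ := hxl 2
  obtain ⟨m0, hm0⟩ := hxl 0
  obtain ⟨m1, hm1⟩ := hxl 1
  have hk0 : 0 ≤ k := by
    have : (0 : ℝ) ≤ k := by rw [← hk]; beta_reduce; rw [c2]; positivity
    exact_mod_cast this
  obtain ⟨q, rfl⟩ := Int.eq_ofNat_of_zero_le hk0
  have hq : (n : ℝ) * s = q := by
    have := hk; beta_reduce at this; rw [c2] at this; simpa using this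
  have hqn : q ≤ n := by
    have : (q : ℝ) ≤ n := by rw [← hq]; nlinarith
    exact_mod_cast this
  obtain ⟨p, rfl⟩ := Nat.exists_eq_add_of_le' hqn
  have hp : ((p + q : ℕ) : ℝ) * r = p := by
    have : r = 1 - s := by linarith
    rw [this, mul_sub, hq]; push_cast; ring
  beta_reduce at hm0 hm1
  rw [c0, hp, hq] at hm0
  rw [c1, hp, hq] at hm1
  obtain ⟨lf, lg, h1, h2, h3, h4, h5⟩ := polygon_split hVF hVG lF lG hFsm href p q (m0, m1) f g hf hg
    (by ext i; fin_cases i <;> simp [pt, hm0, hm1])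
  let L : List (Fin 3 → ℝ) := (lf.map fun z => emb (pt z) 0) ++ (lg.map fun z => emb (pt z) 1)
  have hL : L.length = p + q := by simp [L, h1, h2]
  have hmem : ∀ y ∈ L, y ∈ cayley F G ∧ IsLatticePt y := by
    intro y hy
    rcases List.mem_append.1 hy with hy | hy
    · obtain ⟨a, ha, rfl⟩ := List.mem_map.1 hy
      exact ⟨subset_convexHull ℝ _ (Or.inl ⟨_, h3 a ha, rfl⟩), emb_lattice _ _ 0 (by simp)⟩
    · obtain ⟨a, ha, rfl⟩ := List.mem_map.1 hy
      exact ⟨subset_convexHull ℝ _ (Or.inr ⟨_, h4 a ha, rfl⟩), emb_lattice _ _ 1 (by simp)⟩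
  have hsum : L.sum = emb (pt (m0, m1)) q := by
    rw [List.sum_append, sum_emb, sum_emb, ← h5, h2, pt_add]
    ext i; fin_cases i <;> simp [emb]
  refine ⟨fun i => L.get (i.cast hL.symm), fun i => hmem _ (List.get_mem _ _), ?_⟩
  have : ∑ i : Fin (p + q), L.get (i.cast hL.symm) = L.sum := by
    rw [← (finCongr hL).sum_comp, ← List.sum_ofFn (f := fun i => L.get ((finCongr hL i).cast hL.symm))]
    simp
  rw [this, hsum]
  ext i; fin_cases i
  · refine c0.trans ?_
    rw [hp, hq, hm0]; rfl
  · refine c1.trans ?_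
    rw [hp, hq, hm1]; rfl
  · refine c2.trans ?_
    rw [hq]; rfl
end

section
/- Prism decomposition normality: let Q₀ ⊂ ℝ² be a smooth lattice polygon and Q₁ a lattice polygon whose normal fan is refined by that of Q₀, with Q₁ ⊆ Q₀ after a common choice of support; then every lattice point of the polytope P = Conv{Q₀×{0}, Q₁×{1}} ⊂ ℝ³ at height t (0 ≤ t ≤ 1 not integral this makes sense only for dilates): for every n ≥ 1 and every lattice point (u, j) ∈ nP ∩ ℤ³ with 0 ≤ j ≤ n, one can write (u,j) as a sum of j lattice points of Q₁×{1} and (n−j) lattice points of Q₀×{0}. -/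
open scoped Pointwise

theorem scarf_four {ι : Type*} [DecidableEq ι] (S : Finset (ℤ × ℤ))
    (hS : ∀ z ∈ S, ∀ z' ∈ S, ∀ m : ℤ × ℤ, m + m = z + z' → m ∈ S)
    (a : ι → ℤ × ℤ → ℝ)
    (ha : ∀ i, ∀ m z z' : ℤ × ℤ, m + m = z + z' → 2 * a i m = a i z + a i z')
    (β : ι → ℝ) (I : Finset ι) (hno : ∀ z ∈ S, ∃ i ∈ I, β i < a i z) :
    ∃ J ⊆ I, J.card ≤ 4 ∧ ∀ z ∈ S, ∃ i ∈ J, β i < a i z := by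
  classical
  obtain ⟨J, hJ, hmin⟩ := Finset.exists_min_image
    (I.powerset.filter (fun J => ∀ z ∈ S, ∃ i ∈ J, β i < a i z)) Finset.card
    ⟨I, by simp only [Finset.mem_filter, Finset.mem_powerset]; exact ⟨subset_rfl, hno⟩⟩
  simp only [Finset.mem_filter, Finset.mem_powerset] at hJ hmin
  obtain ⟨hJI, hJno⟩ := hJ
  refine ⟨J, hJI, ?_, hJno⟩
  have hrem : ∀ i ∈ J, ∃ z ∈ S, ∀ j ∈ J, j ≠ i → a j z ≤ β j := by
    intro i hi
    by_contra hcon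
    push Not at hcon
    have := hmin (J.erase i) ⟨(Finset.erase_subset _ _).trans hJI, by
      intro z hz
      obtain ⟨j, hj, hji, hlt⟩ := hcon z hz
      exact ⟨j, Finset.mem_erase.2 ⟨hji, hj⟩, hlt⟩⟩
    have h2 := Finset.card_erase_lt_of_mem hi
    omega
  have hinit : ∀ i : J, ∃ z : S, β i < a i z ∧ ∀ z' ∈ S, β i < a i z' → a i z ≤ a i z' := by
    intro i
    obtain ⟨z, hz, hzj⟩ := hrem i i.2
    obtain ⟨i', hi', hlt⟩ := hJno z hz
    have hii : i' = i := by
      by_contra hne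
      exact absurd (hzj i' hi' hne) (not_le.2 hlt)
    subst hii
    obtain ⟨m, hm, hm2⟩ := Finset.exists_min_image (S.filter (fun z => β i < a i z)) (a i)
      ⟨z, by simp [hz, hlt]⟩
    simp only [Finset.mem_filter] at hm hm2
    exact ⟨⟨m, hm.1⟩, hm.2, fun z' h1 h2 => hm2 z' ⟨h1, h2⟩⟩
  choose σ0 hσ0 hσ0' using hinit
  let good : (J → S) → Prop := fun σ =>
    (∀ i : J, β i < a i (σ i)) ∧ ∀ z ∈ S, ∃ i : J, a i (σ i) ≤ a i z
  have hg0 : good σ0 := ⟨hσ0, fun z hz => by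
    obtain ⟨i, hi, hlt⟩ := hJno z hz
    exact ⟨⟨i, hi⟩, hσ0' ⟨i, hi⟩ z hz hlt⟩⟩
  obtain ⟨σ, hσ, hmax⟩ := Finset.exists_max_image (Finset.univ.filter good)
    (fun σ => ∑ i : J, a i (σ i)) ⟨σ0, by simp [hg0]⟩
  simp only [Finset.mem_filter, Finset.mem_univ, true_and] at hσ hmax
  have hz : ∀ i : J, ∃ z ∈ S, a i z = a i (σ i) ∧ ∀ j : J, j ≠ i → a j z < a j (σ j) := by
    intro i
    obtain ⟨z0, hz0, hz0j⟩ := hrem i i.2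
    obtain ⟨z, hz, hzm⟩ := Finset.exists_min_image
      (S.filter (fun z => ∀ j : J, j ≠ i → a j z < a j (σ j))) (a i)
      ⟨z0, by
        simp only [Finset.mem_filter]
        refine ⟨hz0, fun j hj => lt_of_le_of_lt (hz0j j j.2 (fun h => hj (Subtype.ext h))) (hσ.1 j)⟩⟩
    simp only [Finset.mem_filter] at hz hzm
    refine ⟨z, hz.1, ?_, hz.2⟩
    have hge : a i (σ i) ≤ a i z := by
      obtain ⟨j, hj⟩ := hσ.2 z hz.1
      by_cases hji : j = i
      · subst hji; exact hj
      · exact absurd (hz.2 j hji) (not_lt.2 hj)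
    by_contra hne
    have hlt : a i (σ i) < a i z := lt_of_le_of_ne hge (Ne.symm hne)
    have hg : good (Function.update σ i ⟨z, hz.1⟩) := by
      constructor
      · intro j
        by_cases hji : j = i
        · subst hji; simp only [Function.update_self]; exact (hσ.1 j).trans hlt
        · rw [Function.update_of_ne hji]; exact hσ.1 j
      · intro y hy
        by_contra hcon
        push Not at hcon
        have h1 := hcon i
        rw [Function.update_self] at h1
        have h2 := hzm y ⟨hy, fun j hj => by
          have := hcon j
          rwa [Function.update_of_ne hj] at this⟩
        exact absurd h1 (not_lt.2 h2)
    have hm := hmax _ hg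
    have : ∑ j : J, a j (σ j) < ∑ j : J, a j (Function.update σ i ⟨z, hz.1⟩ j) := by
      apply Finset.sum_lt_sum
      · intro j _
        by_cases hji : j = i
        · subst hji; simp only [Function.update_self]; exact hge
        · rw [Function.update_of_ne hji]
      · exact ⟨i, Finset.mem_univ _, by simpa only [Function.update_self] using hlt⟩
    linarith
  choose z hzS hzeq hzlt using hz
  by_contra hcard
  push Not at hcard
  have hp : Fintype.card (ZMod 2 × ZMod 2) < Fintype.card J := by
    rw [Fintype.card_prod, ZMod.card, Fintype.card_coe]; omega
  obtain ⟨i, j, hij, heq⟩ := Fintype.exists_ne_map_eq_of_card_lt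
    (fun i : J => (((z i).1 : ZMod 2), ((z i).2 : ZMod 2))) hp
  simp only [Prod.mk.injEq] at heq
  have e1 := (ZMod.intCast_eq_intCast_iff_dvd_sub _ _ _).1 heq.1
  have e2 := (ZMod.intCast_eq_intCast_iff_dvd_sub _ _ _).1 heq.2
  obtain ⟨k1, hk1⟩ := e1
  obtain ⟨k2, hk2⟩ := e2
  push_cast at hk1 hk2
  let m : ℤ × ℤ := ((z i).1 + k1, (z i).2 + k2)
  have hm : m + m = z i + z j := by
    ext <;> simp [m] <;> omega
  have hmS := hS _ (hzS i) _ (hzS j) m hm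
  obtain ⟨l, hl⟩ := hσ.2 m hmS
  have h2 := ha l m _ _ hm
  by_cases hli : l = i
  · subst hli
    have := hzlt j l hij
    have := hzeq l
    linarith
  · by_cases hlj : l = j
    · subst hlj
      have := hzlt i l hli
      have := hzeq l
      linarith
    · have := hzlt i l hli
      have := hzlt j l hlj
      linarith


def cr (d x : Fin 2 → ℝ) : ℝ := d 0 * x 1 - d 1 * x 0

theorem cr_add (d x y : Fin 2 → ℝ) : cr d (x + y) = cr d x + cr d y := by
  simp [cr]; ring
theorem cr_sub (d x y : Fin 2 → ℝ) : cr d (x - y) = cr d x - cr d y := by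
  simp [cr]; ring
theorem cr_smul (d x : Fin 2 → ℝ) (t : ℝ) : cr d (t • x) = t * cr d x := by
  simp [cr]; ring
theorem cr_self (d : Fin 2 → ℝ) : cr d d = 0 := by
  simp [cr]; ring

def crL (d : Fin 2 → ℝ) : (Fin 2 → ℝ) →ₗ[ℝ] ℝ where
  toFun := cr d
  map_add' := cr_add d
  map_smul' := by intro t x; simp [cr_smul]

theorem exists_cr (f : (Fin 2 → ℝ) →ₗ[ℝ] ℝ) : ∃ u : Fin 2 → ℝ, ∀ x, f x = cr u x := by
  refine ⟨![f (Pi.single 1 1), - f (Pi.single 0 1)], fun x => ?_⟩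
  have hx : x = x 0 • (Pi.single 0 1 : Fin 2 → ℝ) + x 1 • (Pi.single 1 1 : Fin 2 → ℝ) := by
    ext i; fin_cases i <;> simp
  conv_lhs => rw [hx]
  simp only [map_add, map_smul, cr, smul_eq_mul]
  simp
  ring

theorem face_lemma (W : Finset (Fin 2 → ℝ)) (y : Fin 2 → ℝ) (hy : y ∈ convexHull ℝ (W : Set (Fin 2 → ℝ)))
    (L : (Fin 2 → ℝ) →ₗ[ℝ] ℝ) (hL : ∀ w ∈ W, L w ≤ L y) :
    y ∈ convexHull ℝ ({w | w ∈ W ∧ L w = L y} : Set (Fin 2 → ℝ)) := by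
  classical
  rw [Finset.mem_convexHull'] at hy
  obtain ⟨c, hc0, hc1, hcy⟩ := hy
  have hz : ∑ w ∈ W, c w * (L y - L w) = 0 := by
    have : L y = ∑ w ∈ W, c w * L w := by
      conv_lhs => rw [← hcy]
      simp
    simp only [mul_sub, Finset.sum_sub_distrib, ← Finset.sum_mul, hc1]
    linarith
  rw [Finset.sum_eq_zero_iff_of_nonneg (fun w hw => mul_nonneg (hc0 w hw) (by linarith [hL w hw]))] at hz
  have : ({w | w ∈ W ∧ L w = L y} : Set (Fin 2 → ℝ)) = ↑(W.filter (fun w => L w = L y)) := by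
    ext; simp
  rw [this, Finset.mem_convexHull']
  have hne : ∀ w ∈ W, ¬ (L w = L y) → c w = 0 := by
    intro w hw hn
    rcases mul_eq_zero.1 (hz w hw) with h | h
    · exact h
    · exact absurd (by linarith) hn
  refine ⟨c, fun w hw => hc0 w (Finset.mem_filter.1 hw).1, ?_, ?_⟩
  · rw [Finset.sum_filter, ← hc1]
    refine Finset.sum_congr rfl fun w hw => ?_
    split_ifs with h
    · rfl
    · exact (hne w hw h).symm
  · rw [Finset.sum_filter]
    refine Eq.trans ?_ hcy
    refine Finset.sum_congr rfl fun w hw => ?_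
    split_ifs with h
    · rfl
    · simp [hne w hw h]

theorem sep_zero (C : Set (Fin 2 → ℝ)) (hC : Convex ℝ C) (h0 : (0 : Fin 2 → ℝ) ∉ C) :
    ∃ f : (Fin 2 → ℝ) →ₗ[ℝ] ℝ, f ≠ 0 ∧ ∀ c ∈ C, f c ≤ 0 := by
  by_cases hi : (interior C).Nonempty
  · obtain ⟨f, hf⟩ := geometric_hahn_banach_open_point hC.interior isOpen_interior
      (fun h => h0 (interior_subset h))
    refine ⟨f.toLinearMap, ?_, ?_⟩
    · rintro h
      obtain ⟨a, ha⟩ := hi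
      have := hf a ha
      have h2 : f a = 0 := by
        have := congrArg (fun g => g a) h
        simpa using this
      simp [h2] at this
    · intro c hc
      have hcl : c ∈ closure (interior C) := by
        rw [hC.closure_interior_eq_closure_of_nonempty_interior hi]
        exact subset_closure hc
      have hcl2 : IsClosed {x | f x ≤ 0} := isClosed_le f.continuous continuous_const
      have : closure (interior C) ⊆ {x | f x ≤ 0} := by
        apply closure_minimal _ hcl2
        intro a ha
        have := hf a ha
        simp at this
        exact this.le
      exact this hcl
  · rw [hC.interior_nonempty_iff_affineSpan_eq_top] at hi
    rcases C.eq_empty_or_nonempty with rfl | ⟨c0, hc0⟩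
    · refine ⟨LinearMap.proj 0, ?_, by simp⟩
      intro h
      have := congrArg (fun g => g (fun _ => (1:ℝ))) h
      simp at this
    have hdir : vectorSpan ℝ C < ⊤ := by
      rw [lt_top_iff_ne_top]
      intro h
      apply hi
      rw [← direction_affineSpan] at h
      exact (AffineSubspace.direction_eq_top_iff_of_nonempty ⟨c0, subset_affineSpan ℝ C hc0⟩).1 h
    obtain ⟨f, hf, hle⟩ := Submodule.exists_le_ker_of_lt_top _ hdir
    have hconst : ∀ c ∈ C, f c = f c0 := by
      intro c hc
      have := hle (vsub_mem_vectorSpan ℝ hc hc0)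
      simp at this
      linarith
    rcases le_total (f c0) 0 with h | h
    · exact ⟨f, hf, fun c hc => by rw [hconst c hc]; exact h⟩
    · exact ⟨-f, by simpa using hf, fun c hc => by simp [hconst c hc]; exact h⟩

theorem exit1 (Q : Set (Fin 2 → ℝ)) (hQ : IsClosed Q) (c z : Fin 2 → ℝ) (hc : c ∈ Q) (hz : z ∉ Q) :
    ∃ y ∈ segment ℝ c z, y ∈ Q ∧ ∀ s : ℝ, 0 < s → s ≤ 1 → y + s • (z - y) ∉ Q := by
  have hcont : Continuous (fun t : ℝ => c + t • (z - c)) := by fun_prop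
  have hcl : IsClosed {t : ℝ | c + t • (z - c) ∈ Q} := hQ.preimage hcont
  have hcomp : IsCompact (Set.Icc (0:ℝ) 1 ∩ {t : ℝ | c + t • (z - c) ∈ Q}) :=
    isCompact_Icc.inter_right hcl
  obtain ⟨t, ⟨ht, htQ⟩, hmax⟩ := hcomp.exists_isGreatest ⟨0, by simp, by simpa using hc⟩
  refine ⟨c + t • (z - c), ?_, htQ, ?_⟩
  · rw [segment_eq_image']
    exact ⟨t, ht, rfl⟩
  · intro s hs0 hs1 hmem
    have ht1 : t < 1 := by
      rcases ht.2.lt_or_eq with h | h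
      · exact h
      · subst h
        simp at htQ
        exact absurd htQ hz
    have h2 : t + s * (1 - t) ≤ t := by
      apply hmax
      refine ⟨⟨?_, ?_⟩, ?_⟩
      · have := ht.1
        nlinarith
      · nlinarith
      · have : c + (t + s * (1 - t)) • (z - c) = c + t • (z - c) + s • (z - (c + t • (z - c))) := by
          ext i; simp; ring
        simp only [Set.mem_ofPred_eq, this]
        exact hmem
    nlinarith [mul_pos hs0 (sub_pos.2 ht1)]

theorem cr_line (u p q : Fin 2 → ℝ) (hu : u ≠ 0) (h : cr u p = cr u q) :
    p = q + (((p 0 - q 0) * u 0 + (p 1 - q 1) * u 1) / (u 0 ^ 2 + u 1 ^ 2)) • u := by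
  have hpos : 0 < u 0 ^ 2 + u 1 ^ 2 := by
    by_contra hn
    apply hu
    have h0 : u 0 = 0 := by nlinarith [sq_nonneg (u 0), sq_nonneg (u 1)]
    have h1 : u 1 = 0 := by nlinarith [sq_nonneg (u 0), sq_nonneg (u 1)]
    ext i; fin_cases i <;> simp [h0, h1]
  unfold cr at h
  ext i
  fin_cases i
  · simp
    field_simp
    linear_combination (-u 1) * h
  · simp
    field_simp
    linear_combination (u 0) * h

theorem exit2 (W : Finset (Fin 2 → ℝ)) (y z : Fin 2 → ℝ)
    (hy : y ∈ convexHull ℝ (W : Set (Fin 2 → ℝ)))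
    (hs : ∀ s : ℝ, 0 < s → s ≤ 1 → y + s • (z - y) ∉ convexHull ℝ (W : Set (Fin 2 → ℝ))) :
    y ∈ W ∨ ∃ u : Fin 2 → ℝ, ∃ ρ ρ' : ℝ, u ≠ 0 ∧ 0 < ρ ∧ 0 < ρ' ∧ y - ρ • u ∈ W ∧ y + ρ' • u ∈ W ∧
      (∀ q ∈ convexHull ℝ (W : Set (Fin 2 → ℝ)), cr u q ≤ cr u y) ∧ cr u y < cr u z := by
  set Q := convexHull ℝ (W : Set (Fin 2 → ℝ)) with hQdef
  have hQ : Convex ℝ Q := convex_convexHull ℝ _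
  have hR : Convex ℝ ((AffineMap.lineMap y z : ℝ →ᵃ[ℝ] _) '' Set.Ioc (0:ℝ) 1) :=
    (convex_Ioc 0 1).affine_image _
  have hline : ∀ s : ℝ, (AffineMap.lineMap y z : ℝ →ᵃ[ℝ] _) s = y + s • (z - y) := by
    intro s; rw [AffineMap.lineMap_apply]; simp [add_comm]
  obtain ⟨f, hf0, hf⟩ := sep_zero _ (hQ.sub hR) (by
    intro h
    obtain ⟨q, hq, r, ⟨s, hs', rfl⟩, h⟩ := h
    rw [hline] at h
    apply hs s hs'.1 hs'.2
    have : q = y + s • (z - y) := sub_eq_zero.1 h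
    rwa [← this])
  obtain ⟨u, hu⟩ := exists_cr f
  have hu0 : u ≠ 0 := by
    rintro rfl
    apply hf0
    ext x
    simp [hu, cr]
  have key : ∀ q ∈ Q, ∀ s : ℝ, 0 < s → s ≤ 1 → cr u q - cr u y - s * (cr u z - cr u y) ≤ 0 := by
    intro q hq s h0 h1
    have := hf _ (Set.sub_mem_sub hq ⟨s, ⟨h0, h1⟩, rfl⟩)
    rw [hline, hu, cr_sub, cr_add, cr_smul, cr_sub] at this
    linarith
  have hyz : cr u y ≤ cr u z := by
    have := key y hy 1 one_pos le_rfl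
    linarith
  have hqy : ∀ q ∈ Q, cr u q ≤ cr u y := by
    intro q hq
    by_contra hn
    push Not at hn
    set a := cr u q - cr u y
    set b := cr u z - cr u y
    have hb : 0 ≤ b := sub_nonneg.2 hyz
    have ha : 0 < a := sub_pos.2 hn
    have h3 := key q hq (a / (a + b + b + 1)) (by positivity) (by
      rw [div_le_one (by positivity)]; linarith)
    have h4 : a / (a + b + b + 1) * b < a := by
      rw [div_mul_eq_mul_div, div_lt_iff₀ (by positivity)]
      nlinarith
    linarith
  have hF := face_lemma W y hy (crL u) (fun w hw => hqy w (subset_convexHull ℝ _ hw))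
  by_cases hyW : y ∈ W
  · exact Or.inl hyW
  right
  have hupos : 0 < u 0 ^ 2 + u 1 ^ 2 := by
    by_contra hn
    apply hu0
    have h0 : u 0 = 0 := by nlinarith [sq_nonneg (u 0), sq_nonneg (u 1)]
    have h1 : u 1 = 0 := by nlinarith [sq_nonneg (u 0), sq_nonneg (u 1)]
    ext i; fin_cases i <;> simp [h0, h1]
  let σ : (Fin 2 → ℝ) → ℝ := fun p => ((p 0 - y 0) * u 0 + (p 1 - y 1) * u 1) / (u 0 ^ 2 + u 1 ^ 2)
  have hσ : ∀ p, cr u p = cr u y → p = y + σ p • u := fun p hp => cr_line u p y hu0 hp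
  have hσy : σ y = 0 := by simp [σ]
  have hσaff : ∀ p q : Fin 2 → ℝ, ∀ a b : ℝ, a + b = 1 → σ (a • p + b • q) = a * σ p + b * σ q := by
    intro p q a b hab
    simp only [σ]
    have : b = 1 - a := by linarith
    subst this
    simp
    field_simp
    ring
  have hpos : ∃ w ∈ W, cr u w = cr u y ∧ 0 < σ w := by
    by_contra hn
    push Not at hn
    have : convexHull ℝ ({w | w ∈ W ∧ crL u w = crL u y} : Set (Fin 2 → ℝ)) ⊆ {p | σ p < 0} := by
      apply convexHull_min
      · rintro w ⟨hw, hwe⟩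
        rcases (hn w hw hwe).lt_or_eq with h | h
        · exact h
        · have := hσ w hwe
          rw [h] at this
          simp at this
          exact absurd (this ▸ hw) hyW
      · intro p hp q hq a b ha hb hab
        simp only [Set.mem_ofPred_eq] at hp hq ⊢
        rw [hσaff p q a b hab]
        rcases ha.lt_or_eq with h | h
        · nlinarith
        · subst h
          have : b = 1 := by linarith
          subst this
          simpa using hq
    have := this hF
    simp [hσy] at this
  have hneg : ∃ w ∈ W, cr u w = cr u y ∧ σ w < 0 := by
    by_contra hn
    push Not at hn
    have : convexHull ℝ ({w | w ∈ W ∧ crL u w = crL u y} : Set (Fin 2 → ℝ)) ⊆ {p | 0 < σ p} := by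
      apply convexHull_min
      · rintro w ⟨hw, hwe⟩
        rcases (hn w hw hwe).lt_or_eq with h | h
        · exact h
        · have := hσ w hwe
          rw [← h] at this
          simp at this
          exact absurd (this ▸ hw) hyW
      · intro p hp q hq a b ha hb hab
        simp only [Set.mem_ofPred_eq] at hp hq ⊢
        rw [hσaff p q a b hab]
        rcases ha.lt_or_eq with h | h
        · nlinarith
        · subst h
          have : b = 1 := by linarith
          subst this
          simpa using hq
    have := this hF
    simp [hσy] at this
  obtain ⟨w', hw', hwe', hp'⟩ := hpos
  obtain ⟨w, hw, hwe, hp⟩ := hneg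
  have e1 : y - (-σ w) • u = w := by
    conv_rhs => rw [hσ w hwe]
    simp
  have e2 : y + (σ w') • u = w' := (hσ w' hwe').symm
  refine ⟨u, -σ w, σ w', hu0, by linarith, hp', by rw [e1]; exact hw, by rw [e2]; exact hw', hqy, ?_⟩
  rcases hyz.lt_or_eq with h | h
  · exact h
  exfalso
  have hz := hσ z h.symm
  set τ := σ z
  set r := σ w
  set r' := σ w'
  obtain ⟨m, hm0, hmr, hmr'⟩ : ∃ m : ℝ, 0 < m ∧ m ≤ -r ∧ m ≤ r' :=
    ⟨min (-r) r', lt_min (by linarith) hp', min_le_left _ _, min_le_right _ _⟩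
  set s := m / (m + |τ|) with hsdef
  have hsp : 0 < s := by positivity
  have hs1 : s ≤ 1 := by
    rw [hsdef, div_le_one (by positivity)]
    linarith [abs_nonneg τ]
  have hsτ : |s * τ| ≤ m := by
    rw [abs_mul, abs_of_pos hsp, hsdef, div_mul_eq_mul_div, div_le_iff₀ (by positivity)]
    nlinarith [abs_nonneg τ]
  rw [abs_le] at hsτ
  apply hs s hsp hs1
  have hden : 0 < r' - r := by linarith
  have : y + s • (z - y) = ((r' - s * τ) / (r' - r)) • w + ((s * τ - r) / (r' - r)) • w' := by
    rw [← e1, ← e2, hz]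
    ext i
    simp
    field_simp
    ring
  rw [this]
  apply hQ (subset_convexHull ℝ _ hw) (subset_convexHull ℝ _ hw')
  · apply div_nonneg <;> linarith
  · apply div_nonneg <;> linarith
  · field_simp; ring

def toE (z : ℤ × ℤ) : Fin 2 → ℝ := ![(z.1 : ℝ), (z.2 : ℝ)]

theorem toE_add (a b : ℤ × ℤ) : toE (a + b) = toE a + toE b := by
  ext i; fin_cases i <;> simp [toE]
theorem toE_sub (a b : ℤ × ℤ) : toE (a - b) = toE a - toE b := by
  ext i; fin_cases i <;> simp [toE]
theorem toE_zsmul (k : ℤ) (b : ℤ × ℤ) : toE (k • b) = (k : ℝ) • toE b := by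
  ext i; fin_cases i <;> simp [toE]
theorem toE_inj {a b : ℤ × ℤ} (h : toE a = toE b) : a = b := by
  have h0 := congrFun h 0
  have h1 := congrFun h 1
  simp [toE] at h0 h1
  exact Prod.ext h0 h1
theorem smul_cr (d x : Fin 2 → ℝ) (t : ℝ) : cr (t • d) x = t * cr d x := by
  simp [cr]; ring

theorem prim_line (d e : ℤ × ℤ) (hd : IsCoprime d.1 d.2) (h : cr (toE d) (toE e) = 0) :
    ∃ k : ℤ, e = k • d := by
  obtain ⟨x, y, hxy⟩ := hd
  have h' : d.1 * e.2 - d.2 * e.1 = 0 := by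
    simp [cr, toE] at h
    exact_mod_cast h
  refine ⟨x * e.1 + y * e.2, Prod.ext ?_ ?_⟩
  · simp
    linear_combination (-e.1) * hxy - y * h'
  · simp
    linear_combination (-e.2) * hxy + x * h'

theorem exists_prim (e : ℤ × ℤ) (he : e ≠ 0) :
    ∃ d : ℤ × ℤ, ∃ g : ℤ, 0 < g ∧ IsCoprime d.1 d.2 ∧ e = g • d := by
  have hg : 0 < (Int.gcd e.1 e.2 : ℤ) := by
    have : Int.gcd e.1 e.2 ≠ 0 := by
      intro h
      rw [Int.gcd_eq_zero_iff] at h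
      exact he (Prod.ext h.1 h.2)
    positivity
  obtain ⟨a, ha⟩ := Int.gcd_dvd_left e.1 e.2
  obtain ⟨b, hb⟩ := Int.gcd_dvd_right e.1 e.2
  refine ⟨(a, b), _, hg, ?_, Prod.ext (by simpa using ha) (by simpa using hb)⟩
  have hbez := Int.gcd_eq_gcd_ab e.1 e.2
  set G : ℤ := (Int.gcd e.1 e.2 : ℤ)
  refine ⟨Int.gcdA e.1 e.2, Int.gcdB e.1 e.2, ?_⟩
  have : G * (Int.gcdA e.1 e.2 * a + Int.gcdB e.1 e.2 * b) = G * 1 := by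
    have h1 : e.1 * Int.gcdA e.1 e.2 = G * a * Int.gcdA e.1 e.2 := by rw [← ha]
    have h2 : e.2 * Int.gcdB e.1 e.2 = G * b * Int.gcdB e.1 e.2 := by rw [← hb]
    linear_combination -hbez - h1 - h2
  exact mul_left_cancel₀ hg.ne' this

theorem conv_line {Q : Set (Fin 2 → ℝ)} (hQ : Convex ℝ Q) (y u : Fin 2 → ℝ) (a b t : ℝ)
    (ha : y + a • u ∈ Q) (hb : y + b • u ∈ Q) (h1 : a ≤ t) (h2 : t ≤ b) : y + t • u ∈ Q := by
  rcases h1.lt_or_eq with h | h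
  · have hden : 0 < b - a := by linarith
    have : y + t • u = ((b - t) / (b - a)) • (y + a • u) + ((t - a) / (b - a)) • (y + b • u) := by
      ext i
      simp
      field_simp
      ring
    rw [this]
    apply hQ ha hb
    · apply div_nonneg <;> linarith
    · apply div_nonneg <;> linarith
    · field_simp; ring
  · rw [← h]; exact ha

theorem fdata (P : Set (Fin 2 → ℝ)) (hP : Convex ℝ P) (W : Finset (Fin 2 → ℝ))
    (hWl : ∀ w ∈ W, ∃ z, w = toE z) (c : Fin 2 → ℝ) (hcP : c ∈ P)
    (hcQ : c ∈ convexHull ℝ (W : Set (Fin 2 → ℝ)))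
    (hno : ∀ z, toE z ∈ P → toE z ∉ convexHull ℝ (W : Set (Fin 2 → ℝ)))
    (edge : ∀ u : Fin 2 → ℝ, ∀ w ∈ W, ∀ w' ∈ W, w ≠ w' → (∀ q ∈ W, cr u q ≤ cr u w) →
      cr u w' = cr u w → ∃ v v' : ℤ × ℤ, v ≠ v' ∧ toE v ∈ P ∧ toE v' ∈ P ∧
        (∀ p ∈ P, cr u (toE v) ≤ cr u p) ∧ cr u (toE v') = cr u (toE v))
    (z : ℤ × ℤ) (hz : toE z ∈ P) :
    ∃ d w : ℤ × ℤ, IsCoprime d.1 d.2 ∧ cr (toE d) (toE w) < cr (toE d) (toE z) ∧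
      (∀ q ∈ convexHull ℝ (W : Set (Fin 2 → ℝ)), cr (toE d) q ≤ cr (toE d) (toE w)) ∧
      (∀ x ∈ P, cr (toE d) x = cr (toE d) (toE w) → x ∈ convexHull ℝ (W : Set (Fin 2 → ℝ))) ∧
      ∃ s : ℤ × ℤ, toE s ∈ P ∧ toE (s + d) ∈ P ∧ cr (toE d) (toE s) ≤ cr (toE d) (toE w) := by
  have hQ := convex_convexHull ℝ (W : Set (Fin 2 → ℝ))
  have hsubQ : ∀ w ∈ W, w ∈ convexHull ℝ (W : Set (Fin 2 → ℝ)) := fun w hw => subset_convexHull ℝ _ hw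
  obtain ⟨y, hyseg, hyQ, hbey⟩ := exit1 _ (W.finite_toSet.isCompact_convexHull ℝ).isClosed c (toE z)
    hcQ (hno z hz)
  have hyP : y ∈ P := hP.segment_subset hcP hz hyseg
  rcases exit2 W y (toE z) hyQ hbey with hyW | ⟨u, ρ, ρ', hu0, hρ, hρ', hw, hw', hmax, hlt⟩
  · obtain ⟨m, rfl⟩ := hWl y hyW
    exact absurd hyQ (hno m hyP)
  obtain ⟨a, ha⟩ := hWl _ hw
  obtain ⟨b, hb⟩ := hWl _ hw'
  have hba : toE (b - a) = (ρ + ρ') • u := by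
    rw [toE_sub, ← ha, ← hb]
    ext i; simp; ring
  have hne : b - a ≠ 0 := by
    intro h
    rw [h] at hba
    have h3 : (ρ + ρ') • u = 0 := by
      rw [← hba]; ext i; fin_cases i <;> simp [toE]
    rcases smul_eq_zero.1 h3 with h4 | h4
    · linarith
    · exact hu0 h4
  obtain ⟨d, g, hg, hcop, hd⟩ := exists_prim _ hne
  rw [hd, toE_zsmul] at hba
  have hgR : (0:ℝ) < g := by exact_mod_cast hg
  set κ := (ρ + ρ') / g with hκ
  have hκ0 : 0 < κ := by positivity
  have hdu : toE d = κ • u := by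
    have : toE d = (g:ℝ)⁻¹ • ((g:ℝ) • toE d) := by rw [smul_smul, inv_mul_cancel₀ hgR.ne', one_smul]
    rw [this, hba, smul_smul, hκ]
    congr 1
    field_simp
  have hcr : ∀ x, cr (toE d) x = κ * cr u x := fun x => by rw [hdu, smul_cr]
  have hya : cr u (toE a) = cr u y := by
    rw [← ha, cr_sub, cr_smul, cr_self]; ring
  have hyb : cr u (toE b) = cr u y := by
    rw [← hb, cr_add, cr_smul, cr_self]; ring
  refine ⟨d, a, hcop, ?_, ?_, ?_, ?_⟩
  · rw [hcr, hcr, hya]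
    exact mul_lt_mul_of_pos_left hlt hκ0
  · intro q hq
    rw [hcr, hcr, hya]
    exact mul_le_mul_of_nonneg_left (hmax q hq) hκ0.le
  · intro x hx hxe
    rw [hcr, hcr, hya] at hxe
    have hxe' : cr u x = cr u y := mul_left_cancel₀ hκ0.ne' hxe
    have hxl := cr_line u x y hu0 hxe'
    set σ := ((x 0 - y 0) * u 0 + (x 1 - y 1) * u 1) / (u 0 ^ 2 + u 1 ^ 2)
    have hw2 : y + (-ρ) • u ∈ convexHull ℝ (W : Set (Fin 2 → ℝ)) := by
      have : y + (-ρ) • u = y - ρ • u := by rw [neg_smul, sub_eq_add_neg]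
      rw [this]; exact hsubQ _ hw
    have hy0 : y + (0:ℝ) • u ∈ P := by simpa using hyP
    rw [hxl] at hx ⊢
    by_cases h1 : σ < -ρ
    · exfalso
      have := conv_line hP y u σ 0 (-ρ) hx hy0 h1.le (by linarith)
      apply hno a
      · rw [← ha, sub_eq_add_neg, ← neg_smul]; exact this
      · rw [← ha]; exact hsubQ _ hw
    by_cases h2 : ρ' < σ
    · exfalso
      have := conv_line hP y u 0 σ ρ' hy0 hx hρ'.le h2.le
      apply hno b
      · rw [← hb]; exact this
      · rw [← hb]; exact hsubQ _ hw'
    exact conv_line hQ y u (-ρ) ρ' σ hw2 (hsubQ _ hw') (by linarith) (by linarith)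
  · obtain ⟨v, v', hvv, hv, hv', hmin, heq⟩ := edge u _ hw _ hw' (by
        intro h
        rw [ha, hb] at h
        exact hne (by rw [toE_inj h]; simp))
      (by intro q hq; rw [ha, hya]; exact hmax q (hsubQ q hq)) (by rw [ha, hb, hya, hyb])
    obtain ⟨k, hk⟩ := prim_line d (v' - v) hcop (by rw [toE_sub, cr_sub, hcr, hcr, heq]; ring)
    have hle : cr (toE d) (toE v) ≤ cr (toE d) (toE a) := by
      rw [hcr, hcr, hya]
      exact mul_le_mul_of_nonneg_left ((hmin c hcP).trans (hmax c hcQ)) hκ0.le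
    have hk0 : k ≠ 0 := by
      rintro rfl
      simp at hk
      exact hvv (sub_eq_zero.1 hk).symm
    have hv'e : toE v' = toE v + (k:ℝ) • toE d := by
      rw [← toE_zsmul, ← hk, ← toE_add]; simp
    rcases lt_or_gt_of_ne hk0 with h | h
    · refine ⟨v', hv', ?_, by rw [hcr, heq, ← hcr]; exact hle⟩
      have hkR : (k:ℝ) + 1 ≤ 0 := by exact_mod_cast h
      have : toE (v' + d) = toE v + ((k:ℝ) + 1) • toE d := by
        rw [toE_add, hv'e, add_smul, one_smul, add_assoc]
      rw [this]
      exact conv_line hP (toE v) (toE d) k 0 _ (hv'e ▸ hv') (by simpa using hv) (by linarith) hkR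
    · refine ⟨v, hv, ?_, hle⟩
      have hkR : (1:ℝ) ≤ k := by exact_mod_cast h
      have : toE (v + d) = toE v + (1:ℝ) • toE d := by
        rw [toE_add, one_smul]
      rw [this]
      exact conv_line hP (toE v) (toE d) 0 k _ (by simpa using hv) (hv'e ▸ hv')  (by linarith) hkR

theorem seg_lattice {P : Set (Fin 2 → ℝ)} (hP : Convex ℝ P) (d w : ℤ × ℤ) (hd : toE d ≠ 0)
    (Y : Fin 2 → ℝ) (κ : ℝ) (hY : Y ∈ P) (hZ : Y + κ • toE d ∈ P) (hκ : 1 ≤ |κ|)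
    (hl : cr (toE d) Y = cr (toE d) (toE w)) :
    ∃ m : ℤ × ℤ, toE m ∈ P ∧ cr (toE d) (toE m) = cr (toE d) (toE w) := by
  have hYl := cr_line (toE d) Y (toE w) hd hl
  set σ := ((Y 0 - toE w 0) * toE d 0 + (Y 1 - toE w 1) * toE d 1) / (toE d 0 ^ 2 + toE d 1 ^ 2)
  have hk : ∃ k : ℤ, toE w + (k:ℝ) • toE d ∈ P := by
    rw [hYl] at hY
    rw [hYl, add_assoc, ← add_smul] at hZ
    rcases le_abs.1 hκ with h | h
    · exact ⟨⌈σ⌉, conv_line hP _ _ _ _ _ hY hZ (Int.le_ceil σ) (by linarith [Int.ceil_lt_add_one σ])⟩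
    · exact ⟨⌊σ⌋, conv_line hP _ _ _ _ _ hZ hY (by linarith [Int.lt_floor_add_one σ]) (Int.floor_le σ)⟩
  obtain ⟨k, hk⟩ := hk
  refine ⟨w + k • d, ?_, ?_⟩
  · rw [toE_add, toE_zsmul]; exact hk
  · rw [toE_add, toE_zsmul, cr_add, cr_smul, cr_self]; ring

theorem lerp_mem {P : Set (Fin 2 → ℝ)} (hP : Convex ℝ P) {A B : Fin 2 → ℝ} (hA : A ∈ P) (hB : B ∈ P)
    (t : ℝ) (h0 : 0 ≤ t) (h1 : t ≤ 1) : A + t • (B - A) ∈ P :=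
  conv_line hP A (B - A) 0 1 t (by simpa using hA) (by simpa using hB) h0 h1

theorem half_lemma {P : Set (Fin 2 → ℝ)} (hP : Convex ℝ P) (d1 d2 A1 B1 A2 B2 : Fin 2 → ℝ)
    (hd1 : d1 ≠ 0) (D l1 : ℝ) (hD : 0 < D) (hDa : |cr d2 d1| = D)
    (hA1 : A1 ∈ P) (hB1 : B1 ∈ P) (hA2 : A2 ∈ P) (hB2 : B2 ∈ P)
    (e1 : cr d1 B1 = cr d1 A1) (e2 : cr d2 B2 = cr d2 A2)
    (f1 : cr d2 B1 = cr d2 A1 + D) (f2 : cr d1 B2 = cr d1 A2 + D)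
    (hl : cr d1 A1 ≤ l1) (hl2 : l1 < cr d1 A2)
    (hab : cr d1 A2 - cr d1 A1 ≤ cr d2 A1 - cr d2 A2) :
    ∃ Y ∈ P, ∃ κ : ℝ, 1 ≤ |κ| ∧ Y + κ • d1 ∈ P ∧ cr d1 Y = l1 := by
  set a := cr d1 A2 - cr d1 A1 with ha
  set b := cr d2 A1 - cr d2 A2 with hb
  set X := l1 - cr d1 A1 with hX
  have ha0 : 0 < a := by linarith
  have hX0 : 0 ≤ X := by linarith
  have hXa : X ≤ a := by linarith
  set Y := A1 + (X / a) • (A2 - A1) with hYd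
  set Z := B1 + (X / (a + D)) • (B2 - B1) with hZd
  have hY : Y ∈ P := lerp_mem hP hA1 hA2 _ (by positivity) (by rw [div_le_one ha0]; exact hXa)
  have hZ : Z ∈ P := lerp_mem hP hB1 hB2 _ (by positivity) (by rw [div_le_one (by positivity)]; linarith)
  have hY1 : cr d1 Y = l1 := by
    rw [hYd, cr_add, cr_smul, cr_sub, ← ha, div_mul_cancel₀ _ ha0.ne']
    linarith
  have hZ1 : cr d1 Z = l1 := by
    have : cr d1 B2 - cr d1 B1 = a + D := by linarith
    rw [hZd, cr_add, cr_smul, cr_sub, this, div_mul_cancel₀ _ (by positivity)]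
    linarith
  have hdiff : D ≤ cr d2 Z - cr d2 Y := by
    have h1 : cr d2 B2 - cr d2 B1 = - (b + D) := by linarith
    have h2 : cr d2 A2 - cr d2 A1 = - b := by linarith
    rw [hYd, hZd, cr_add, cr_smul, cr_sub, cr_add, cr_smul, cr_sub, h1, h2, f1]
    have : X / a * b - X / (a + D) * (b + D) = X * D * (b - a) / (a * (a + D)) := by
      field_simp
      ring
    have h3 : 0 ≤ X * D * (b - a) / (a * (a + D)) := by
      apply div_nonneg
      · apply mul_nonneg (by positivity); linarith
      · positivity
    linarith
  have hl := cr_line d1 Z Y hd1 (by rw [hY1, hZ1])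
  set κ := ((Z 0 - Y 0) * d1 0 + (Z 1 - Y 1) * d1 1) / (d1 0 ^ 2 + d1 1 ^ 2)
  refine ⟨Y, hY, κ, ?_, hl ▸ hZ, hY1⟩
  rw [hl, cr_add, cr_smul] at hdiff
  have h5 : D ≤ |κ| * D := by
    calc D ≤ κ * cr d2 d1 := by linarith
      _ ≤ |κ * cr d2 d1| := le_abs_self _
      _ = |κ| * D := by rw [abs_mul, hDa]
  by_contra hn
  push Not at hn
  nlinarith

theorem order_lemma {P : Set (Fin 2 → ℝ)} (d1 d2 s : Fin 2 → ℝ) (l2 : ℝ)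
    (h1 : s ∈ P) (h2 : s + d1 ∈ P) (g1 : l2 < cr d2 s) (g2 : l2 < cr d2 (s + d1)) :
    ∃ A ∈ P, ∃ B ∈ P, cr d1 A = cr d1 s ∧ cr d1 B = cr d1 A ∧ cr d2 B = cr d2 A + |cr d2 d1| ∧ l2 < cr d2 A := by
  have e : cr d1 (s + d1) = cr d1 s := by rw [cr_add, cr_self, add_zero]
  have e2 : cr d2 (s + d1) = cr d2 s + cr d2 d1 := cr_add _ _ _
  rcases le_total 0 (cr d2 d1) with h | h
  · exact ⟨s, h1, s + d1, h2, rfl, e, by rw [abs_of_nonneg h, e2], g1⟩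
  · exact ⟨s + d1, h2, s, h1, e, e.symm, by rw [abs_of_nonpos h, e2]; ring, g2⟩

theorem two_chord {P : Set (Fin 2 → ℝ)} (hP : Convex ℝ P) (d1 d2 w1 w2 s1 s2 : ℤ × ℤ)
    (hd1 : IsCoprime d1.1 d1.2) (hd2 : IsCoprime d2.1 d2.2)
    (h1 : toE s1 ∈ P) (h1' : toE (s1 + d1) ∈ P) (h2 : toE s2 ∈ P) (h2' : toE (s2 + d2) ∈ P)
    (l1 : cr (toE d1) (toE s1) ≤ cr (toE d1) (toE w1))
    (l2 : cr (toE d2) (toE s2) ≤ cr (toE d2) (toE w2))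
    (g1 : cr (toE d2) (toE w2) < cr (toE d2) (toE s1))
    (g1' : cr (toE d2) (toE w2) < cr (toE d2) (toE (s1 + d1)))
    (g2 : cr (toE d1) (toE w1) < cr (toE d1) (toE s2))
    (g2' : cr (toE d1) (toE w1) < cr (toE d1) (toE (s2 + d2))) :
    ∃ m : ℤ × ℤ, toE m ∈ P ∧ (cr (toE d1) (toE m) = cr (toE d1) (toE w1) ∨
      cr (toE d2) (toE m) = cr (toE d2) (toE w2)) := by
  have hne : ∀ d : ℤ × ℤ, IsCoprime d.1 d.2 → toE d ≠ 0 := by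
    intro d hd h
    have : toE d = toE 0 := by rw [h]; ext i; fin_cases i <;> simp [toE]
    have := toE_inj this
    subst this
    exact not_isCoprime_zero_zero hd
  rw [toE_add] at h1' g1' h2' g2'
  by_cases hD : cr (toE d2) (toE d1) = 0
  · obtain ⟨k, hk⟩ := prim_line d2 d1 hd2 hD
    have hku : IsUnit k := by
      refine hd1.isUnit_of_dvd' ⟨d2.1, ?_⟩ ⟨d2.2, ?_⟩ <;> rw [hk] <;> simp
    have hd12 : toE d1 = (k:ℝ) • toE d2 := by rw [hk, toE_zsmul]
    rcases Int.isUnit_iff.1 hku with rfl | rfl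
    · simp at hd12
      rw [hd12] at l1 g2
      linarith
    · have hd21 : toE d2 = - toE d1 := by rw [hd12]; simp
      rw [hd21] at h2'
      set A := toE s1
      set B := toE s2
      have hlt : cr (toE d1) A < cr (toE d1) B := lt_of_le_of_lt l1 g2
      set t := (cr (toE d1) (toE w1) - cr (toE d1) A) / (cr (toE d1) B - cr (toE d1) A) with ht
      have hden : 0 < cr (toE d1) B - cr (toE d1) A := by linarith
      have ht0 : 0 ≤ t := div_nonneg (by linarith) hden.le
      have ht1 : t ≤ 1 := by rw [ht, div_le_one hden]; linarith
      have hY := lerp_mem hP h1 h2' t ht0 ht1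
      have hZ := lerp_mem hP h1' h2 t ht0 ht1
      have hlast : cr (toE d1) (A + t • (B + -toE d1 - A)) = cr (toE d1) (toE w1) := by
        have : cr (toE d1) (B + -toE d1 - A) = cr (toE d1) B - cr (toE d1) A := by
          rw [cr_sub, ← sub_eq_add_neg, cr_sub, cr_self]; ring
        rw [cr_add, cr_smul, this, ht, div_mul_cancel₀ _ hden.ne']
        ring
      obtain ⟨m, hm, hme⟩ := seg_lattice hP d1 w1 (hne d1 hd1) _ 1 hY (by
        convert hZ using 1
        ext i; simp; ring) (by simp) hlast
      exact ⟨m, hm, Or.inl hme⟩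
  · obtain ⟨A1, hA1, B1, hB1, a1, e1, f1, k1⟩ := order_lemma (toE d1) (toE d2) (toE s1) _ h1 h1' g1 g1'
    obtain ⟨A2, hA2, B2, hB2, a2, e2, f2, k2⟩ := order_lemma (toE d2) (toE d1) (toE s2) _ h2 h2' g2 g2'
    have hsym : |cr (toE d1) (toE d2)| = |cr (toE d2) (toE d1)| := by
      have : cr (toE d1) (toE d2) = - cr (toE d2) (toE d1) := by simp [cr]; ring
      rw [this, abs_neg]
    have hpos : 0 < |cr (toE d2) (toE d1)| := abs_pos.2 hD
    rcases le_total (cr (toE d1) A2 - cr (toE d1) A1) (cr (toE d2) A1 - cr (toE d2) A2) with h | h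
    · obtain ⟨Y, hY, κ, hκ, hZ, hl⟩ := half_lemma hP (toE d1) (toE d2) A1 B1 A2 B2 (hne d1 hd1) _ _ hpos rfl
        hA1 hB1 hA2 hB2 e1 e2 f1 (hsym ▸ f2) (a1 ▸ l1) k2 h
      obtain ⟨m, hm, hme⟩ := seg_lattice hP d1 w1 (hne d1 hd1) Y κ hY hZ hκ hl
      exact ⟨m, hm, Or.inl hme⟩
    · obtain ⟨Y, hY, κ, hκ, hZ, hl⟩ := half_lemma hP (toE d2) (toE d1) A2 B2 A1 B1 (hne d2 hd2) _ _
        (hsym ▸ hpos) rfl hA2 hB2 hA1 hB1 e2 e1 f2 (hsym ▸ f1) (a2 ▸ l2) k1 h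
      obtain ⟨m, hm, hme⟩ := seg_lattice hP d2 w2 (hne d2 hd2) Y κ hY hZ hκ hl
      exact ⟨m, hm, Or.inr hme⟩

theorem core_s10 (P : Set (Fin 2 → ℝ)) (hP : Convex ℝ P) (hPc : IsCompact P) (W : Finset (Fin 2 → ℝ))
    (hWl : ∀ w ∈ W, ∃ z, w = toE z) (c : Fin 2 → ℝ) (hcP : c ∈ P)
    (hcQ : c ∈ convexHull ℝ (W : Set (Fin 2 → ℝ))) (hlat : ∃ z, toE z ∈ P)
    (edge : ∀ u : Fin 2 → ℝ, ∀ w ∈ W, ∀ w' ∈ W, w ≠ w' → (∀ q ∈ W, cr u q ≤ cr u w) →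
      cr u w' = cr u w → ∃ v v' : ℤ × ℤ, v ≠ v' ∧ toE v ∈ P ∧ toE v' ∈ P ∧
        (∀ p ∈ P, cr u (toE v) ≤ cr u p) ∧ cr u (toE v') = cr u (toE v)) :
    ∃ z, toE z ∈ P ∧ toE z ∈ convexHull ℝ (W : Set (Fin 2 → ℝ)) := by
  classical
  by_contra hcon
  have hno : ∀ z, toE z ∈ P → toE z ∉ convexHull ℝ (W : Set (Fin 2 → ℝ)) :=
    fun z h1 h2 => hcon ⟨z, h1, h2⟩
  have hcons : ∀ z : ℤ × ℤ, ∃ (φ : (Fin 2 → ℝ) →ₗ[ℝ] ℝ) (β : ℝ), β < φ (toE z) ∧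
      (toE z ∈ P → ∃ d w s : ℤ × ℤ, IsCoprime d.1 d.2 ∧ (∀ x, φ x = cr (toE d) x) ∧
        β = cr (toE d) (toE w) ∧ (∀ q ∈ convexHull ℝ (W : Set (Fin 2 → ℝ)), φ q ≤ β) ∧
        (∀ x ∈ P, φ x = β → x ∈ convexHull ℝ (W : Set (Fin 2 → ℝ))) ∧
        toE s ∈ P ∧ toE (s + d) ∈ P ∧ φ (toE s) ≤ β) ∧
      (toE z ∉ P → ∀ p ∈ P, φ p ≤ β) := by
    intro z
    by_cases hz : toE z ∈ P
    · obtain ⟨d, w, h1, h2, h3, h4, s, h5, h6, h7⟩ := fdata P hP W hWl c hcP hcQ hno edge z hz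
      exact ⟨crL (toE d), cr (toE d) (toE w), h2,
        fun _ => ⟨d, w, s, h1, fun _ => rfl, rfl, h3, h4, h5, h6, h7⟩, fun h => absurd hz h⟩
    · obtain ⟨f, b, hf, hb⟩ := geometric_hahn_banach_closed_point hP hPc.isClosed hz
      exact ⟨f.toLinearMap, b, hb, fun h => absurd h hz, fun _ p hp => (hf p hp).le⟩
  choose φ β hviol hf hg using hcons
  obtain ⟨R, hR⟩ : ∃ R : ℝ, ∀ p ∈ P ∪ (W : Set (Fin 2 → ℝ)), ‖p‖ ≤ R :=
    (hPc.isBounded.union W.finite_toSet.isBounded).exists_norm_le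
  set N : ℤ := ⌈R⌉ with hN
  set S : Finset (ℤ × ℤ) := Finset.Icc (-N) N ×ˢ Finset.Icc (-N) N with hSdef
  have hmemS : ∀ z : ℤ × ℤ, toE z ∈ P ∪ (W : Set (Fin 2 → ℝ)) → z ∈ S := by
    intro z hz
    have h1 := hR _ hz
    have h2 := (norm_le_pi_norm (toE z) 0).trans (h1.trans (Int.le_ceil R))
    have h3 := (norm_le_pi_norm (toE z) 1).trans (h1.trans (Int.le_ceil R))
    simp [toE, Real.norm_eq_abs] at h2 h3
    rw [← hN] at h2 h3
    have h2' : |z.1| ≤ N := by exact_mod_cast h2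
    have h3' : |z.2| ≤ N := by exact_mod_cast h3
    rw [abs_le] at h2' h3'
    simp [hSdef, h2', h3']
  obtain ⟨J, hJS, hJ4, hJ⟩ := scarf_four S (by
      intro z hz z' hz' m hm
      simp only [hSdef, Finset.mem_product, Finset.mem_Icc] at hz hz' ⊢
      have e1 := congrArg Prod.fst hm
      have e2 := congrArg Prod.snd hm
      simp at e1 e2
      omega)
    (fun i m => φ i (toE m)) (by
      intro i m z z' hm
      have : φ i (toE (m + m)) = φ i (toE (z + z')) := by rw [hm]
      simp only [toE_add, map_add] at this
      show 2 * φ i (toE m) = _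
      linarith) β S (fun z hz => ⟨z, hz, hviol z⟩)
  set Jf := J.filter (fun i => toE i ∈ P) with hJf
  set Jg := J.filter (fun i => ¬ toE i ∈ P) with hJg
  have hcard : Jf.card + Jg.card = J.card := Finset.card_filter_add_card_filter_not _
  have hW : ∀ w ∈ W, ∃ i ∈ Jg, β i < φ i w := by
    intro w hw
    obtain ⟨b, rfl⟩ := hWl w hw
    obtain ⟨i, hi, hlt⟩ := hJ b (hmemS b (Or.inr hw))
    refine ⟨i, Finset.mem_filter.2 ⟨hi, fun hiP => ?_⟩, hlt⟩
    obtain ⟨d, w, s, -, -, -, h3, -⟩ := hf i hiP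
    exact absurd hlt (not_lt.2 (h3 _ (subset_convexHull ℝ _ hw)))
  have hPz : ∀ p, toE p ∈ P → ∃ i ∈ Jf, β i < φ i (toE p) := by
    intro p hp
    obtain ⟨i, hi, hlt⟩ := hJ p (hmemS p (Or.inl hp))
    refine ⟨i, Finset.mem_filter.2 ⟨hi, ?_⟩, hlt⟩
    by_contra hiP
    exact absurd hlt (not_lt.2 (hg i hiP _ hp))
  have hJg2 : 2 ≤ Jg.card := by
    by_contra hlt
    have hle : Jg.card ≤ 1 := by omega
    rw [Finset.card_le_one] at hle
    have hWne : (W : Set (Fin 2 → ℝ)).Nonempty := by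
      rw [← convexHull_nonempty_iff (𝕜 := ℝ)]; exact ⟨c, hcQ⟩
    obtain ⟨w0, hw0⟩ := hWne
    obtain ⟨i0, hi0, -⟩ := hW w0 hw0
    have hsub : convexHull ℝ (W : Set (Fin 2 → ℝ)) ⊆ {x | β i0 < φ i0 x} := by
      apply convexHull_min
      · intro w hw
        obtain ⟨i, hi, hlt⟩ := hW w hw
        rw [hle i hi i0 hi0] at hlt
        exact hlt
      · exact convex_halfSpace_gt (φ i0).isLinear _
    exact absurd (hsub hcQ) (not_lt.2 (hg i0 (Finset.mem_filter.1 hi0).2 c hcP))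
  have hJf2 : 2 ≤ Jf.card := by
    by_contra hlt
    have hle : Jf.card ≤ 1 := by omega
    rw [Finset.card_le_one] at hle
    obtain ⟨p0, hp0⟩ := hlat
    obtain ⟨i1, hi1, -⟩ := hPz p0 hp0
    obtain ⟨d, w, s, -, -, -, -, -, hs, -, hsle⟩ := hf i1 (Finset.mem_filter.1 hi1).2
    obtain ⟨i, hi, hlt⟩ := hPz s hs
    rw [hle i hi i1 hi1] at hlt
    linarith
  have hJfe : Jf.card = 2 := by omega
  obtain ⟨i1, i2, -, h12⟩ := Finset.card_eq_two.1 hJfe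
  have hP1 : toE i1 ∈ P := (Finset.mem_filter.1 (by rw [← hJf, h12]; simp : i1 ∈ J.filter (fun i => toE i ∈ P))).2
  have hP2 : toE i2 ∈ P := (Finset.mem_filter.1 (by rw [← hJf, h12]; simp : i2 ∈ J.filter (fun i => toE i ∈ P))).2
  have hor : ∀ p, toE p ∈ P → β i1 < φ i1 (toE p) ∨ β i2 < φ i2 (toE p) := by
    intro p hp
    obtain ⟨i, hi, hlt⟩ := hPz p hp
    rw [h12] at hi
    simp at hi
    rcases hi with rfl | rfl
    · exact Or.inl hlt
    · exact Or.inr hlt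
  obtain ⟨d1, w1, s1, c1, p1, b1, -, on1, hs1, hs1', hle1⟩ := hf i1 hP1
  obtain ⟨d2, w2, s2, c2, p2, b2, -, on2, hs2, hs2', hle2⟩ := hf i2 hP2
  have hle1' : φ i1 (toE (s1 + d1)) ≤ β i1 := by
    rw [p1, toE_add, cr_add, cr_self, add_zero, ← p1]; exact hle1
  have hle2' : φ i2 (toE (s2 + d2)) ≤ β i2 := by
    rw [p2, toE_add, cr_add, cr_self, add_zero, ← p2]; exact hle2
  have g1 := (hor s1 hs1).resolve_left (not_lt.2 hle1)
  have g1' := (hor _ hs1').resolve_left (not_lt.2 hle1')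
  have g2 := (hor s2 hs2).resolve_right (not_lt.2 hle2)
  have g2' := (hor _ hs2').resolve_right (not_lt.2 hle2')
  rw [p1, b1] at g2 g2' hle1
  rw [p2, b2] at g1 g1' hle2
  obtain ⟨m, hm, h | h⟩ := two_chord hP d1 d2 w1 w2 s1 s2 c1 c2 hs1 hs1' hs2 hs2' hle1 hle2 g1 g1' g2 g2'
  · exact hno m hm (on1 _ hm (by rw [p1, b1, h]))
  · exact hno m hm (on2 _ hm (by rw [p2, b2, h]))

def EdgeProp (P Q : Set (Fin 2 → ℝ)) : Prop :=
  ∀ u : Fin 2 → ℝ, ∀ w w' : ℤ × ℤ, toE w ∈ Q → toE w' ∈ Q → w ≠ w' →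
    (∀ q ∈ Q, cr u q ≤ cr u (toE w)) → cr u (toE w') = cr u (toE w) →
    ∃ v v' : ℤ × ℤ, v ≠ v' ∧ toE v ∈ P ∧ toE v' ∈ P ∧
      (∀ p ∈ P, cr u p ≤ cr u (toE v)) ∧ cr u (toE v') = cr u (toE v)

theorem neg_cr (d x : Fin 2 → ℝ) : cr (-d) x = - cr d x := by
  simp [cr]; ring

theorem peel (P : Set (Fin 2 → ℝ)) (hP : Convex ℝ P) (hPc : IsCompact P) (hlat : ∃ z, toE z ∈ P)
    (V : Finset (Fin 2 → ℝ)) (hV : ∀ v ∈ V, ∃ z, v = toE z)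
    (hedge : EdgeProp P (convexHull ℝ (V : Set (Fin 2 → ℝ)))) (x : ℤ × ℤ)
    (hx : toE x ∈ P + convexHull ℝ (V : Set (Fin 2 → ℝ))) :
    ∃ p q : ℤ × ℤ, toE p ∈ P ∧ toE q ∈ convexHull ℝ (V : Set (Fin 2 → ℝ)) ∧ x = p + q := by
  classical
  set W : Finset (Fin 2 → ℝ) := V.image (fun v => toE x - v) with hWdef
  have hWc : convexHull ℝ (W : Set (Fin 2 → ℝ)) =
      (fun v => toE x - v) '' convexHull ℝ (V : Set (Fin 2 → ℝ)) := by
    rw [hWdef, Finset.coe_image, ← Set.singleton_sub, ← Set.singleton_sub, convexHull_sub,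
      convexHull_singleton]
  obtain ⟨p, hp, q, hq, hpq⟩ := hx
  have hpq' : p + q = toE x := hpq
  obtain ⟨z, hzP, hzQ⟩ := core_s10 P hP hPc W (by
      intro w hw
      obtain ⟨v, hv, rfl⟩ := Finset.mem_image.1 hw
      obtain ⟨a, rfl⟩ := hV v hv
      exact ⟨x - a, (toE_sub x a).symm⟩) p hp (by
      rw [hWc]; exact ⟨q, hq, by rw [← hpq']; simp⟩) hlat (by
      intro u w hw w' hw' hne hmax heq
      obtain ⟨v, hv, rfl⟩ := Finset.mem_image.1 hw
      obtain ⟨v', hv', rfl⟩ := Finset.mem_image.1 hw'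
      obtain ⟨a, rfl⟩ := hV v hv
      obtain ⟨a', rfl⟩ := hV v' hv'
      simp only [cr_sub] at heq
      obtain ⟨m, m', h1, h2, h3, h4, h5⟩ := hedge (-u) a a' (subset_convexHull ℝ _ hv)
        (subset_convexHull ℝ _ hv') (by rintro rfl; exact hne rfl) (by
          have : convexHull ℝ (V : Set (Fin 2 → ℝ)) ⊆ {y | crL (-u) y ≤ cr (-u) (toE a)} := by
            apply convexHull_min
            · intro b hb
              have := hmax _ (Finset.mem_image_of_mem _ hb)
              simp only [cr_sub] at this
              show cr (-u) b ≤ cr (-u) (toE a)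
              rw [neg_cr, neg_cr]
              linarith
            · exact convex_halfSpace_le (crL (-u)).isLinear _
          exact fun q hq => this hq) (by rw [neg_cr, neg_cr]; linarith)
      simp only [neg_cr] at h4 h5
      exact ⟨m, m', h1, h2, h3, fun p hp => by linarith [h4 p hp], by linarith⟩)
  rw [hWc] at hzQ
  obtain ⟨y, hy, hyz⟩ := hzQ
  refine ⟨z, x - z, hzP, ?_, by simp⟩
  have : toE (x - z) = y := by
    rw [toE_sub, ← hyz]; simp
  rw [this]; exact hy

theorem toE_nsmul (k : ℕ) (b : ℤ × ℤ) : toE (k • b) = (k : ℝ) • toE b := by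
  ext i; fin_cases i <;> simp [toE]

theorem normal_dec (V : Finset (Fin 2 → ℝ)) (hVne : V.Nonempty) (hV : ∀ v ∈ V, ∃ z, v = toE z) (k : ℕ) :
    ∀ x : ℤ × ℤ, toE x ∈ (k : ℝ) • convexHull ℝ (V : Set (Fin 2 → ℝ)) →
    ∃ g : Fin k → ℤ × ℤ, (∀ i, toE (g i) ∈ convexHull ℝ (V : Set (Fin 2 → ℝ))) ∧ x = ∑ i, g i := by
  set Q := convexHull ℝ (V : Set (Fin 2 → ℝ)) with hQd
  have hQ : Convex ℝ Q := convex_convexHull ℝ _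
  have hQc : IsCompact Q := V.finite_toSet.isCompact_convexHull ℝ
  obtain ⟨v0, hv0⟩ := hVne
  obtain ⟨z0, rfl⟩ := hV v0 hv0
  have hz0 : toE z0 ∈ Q := subset_convexHull ℝ _ hv0
  induction k with
  | zero =>
    intro x hx
    obtain ⟨q, hq, hqx⟩ := hx
    refine ⟨fun i => i.elim0, fun i => i.elim0, ?_⟩
    apply toE_inj
    rw [← hqx]
    ext i; fin_cases i <;> simp [toE]
  | succ k ih =>
    intro x hx
    rcases Nat.eq_zero_or_pos k with rfl | hk
    · refine ⟨fun _ => x, fun _ => by simpa using hx, by simp⟩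
    · have hkR : (0:ℝ) < k := by exact_mod_cast hk
      have hx' : toE x ∈ (k:ℝ) • Q + Q := by
        push_cast at hx
        rw [hQ.add_smul hkR.le zero_le_one, one_smul] at hx
        exact hx
      obtain ⟨p, q, hp, hq, hxpq⟩ := peel ((k:ℝ) • Q) (hQ.smul _) (hQc.smul _)
        ⟨k • z0, by rw [toE_nsmul]; exact Set.smul_mem_smul_set hz0⟩ V hV (by
          intro u w w' hw hw' hne hmax heq
          refine ⟨k • w, k • w', ?_, ?_, ?_, ?_, ?_⟩
          · intro h
            exact hne (smul_right_injective (ℤ × ℤ) hk.ne' h)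
          · rw [toE_nsmul]; exact Set.smul_mem_smul_set hw
          · rw [toE_nsmul]; exact Set.smul_mem_smul_set hw'
          · rintro _ ⟨q, hq, rfl⟩
            simp only [toE_nsmul, cr_smul]
            exact mul_le_mul_of_nonneg_left (hmax q hq) hkR.le
          · rw [toE_nsmul, toE_nsmul, cr_smul, cr_smul, heq]) x hx'
      obtain ⟨g, hg, hgs⟩ := ih p hp
      refine ⟨Fin.cons q g, ?_, ?_⟩
      · intro i
        refine Fin.cases ?_ ?_ i
        · simpa using hq
        · intro i; simpa using hg i
      · rw [Fin.sum_univ_succ]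
        simp only [Fin.cons_zero, Fin.cons_succ]
        rw [← hgs, hxpq, add_comm]

theorem mixed_dec (V₀ V₁ : Finset (Fin 2 → ℝ)) (hV₀ne : V₀.Nonempty) (hV₁ne : V₁.Nonempty)
    (hV₀ : ∀ v ∈ V₀, ∃ z, v = toE z) (hV₁ : ∀ v ∈ V₁, ∃ z, v = toE z)
    (hedge : EdgeProp (convexHull ℝ (V₀ : Set (Fin 2 → ℝ))) (convexHull ℝ (V₁ : Set (Fin 2 → ℝ))))
    (k : ℕ) (hk : 0 < k) (j : ℕ) :
    ∀ x : ℤ × ℤ, toE x ∈ (k : ℝ) • convexHull ℝ (V₀ : Set (Fin 2 → ℝ)) +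
      (j : ℝ) • convexHull ℝ (V₁ : Set (Fin 2 → ℝ)) →
    ∃ (g : Fin k → ℤ × ℤ) (f : Fin j → ℤ × ℤ),
      (∀ i, toE (g i) ∈ convexHull ℝ (V₀ : Set (Fin 2 → ℝ))) ∧
      (∀ i, toE (f i) ∈ convexHull ℝ (V₁ : Set (Fin 2 → ℝ))) ∧ x = ∑ i, g i + ∑ i, f i := by
  set Q₀ := convexHull ℝ (V₀ : Set (Fin 2 → ℝ)) with hQ₀d
  set Q₁ := convexHull ℝ (V₁ : Set (Fin 2 → ℝ)) with hQ₁d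
  have hQ₀ : Convex ℝ Q₀ := convex_convexHull ℝ _
  have hQ₁ : Convex ℝ Q₁ := convex_convexHull ℝ _
  have hQ₀c : IsCompact Q₀ := V₀.finite_toSet.isCompact_convexHull ℝ
  have hQ₁c : IsCompact Q₁ := V₁.finite_toSet.isCompact_convexHull ℝ
  obtain ⟨v0, hv0⟩ := id hV₀ne
  obtain ⟨z0, rfl⟩ := hV₀ v0 hv0
  have hz0 : toE z0 ∈ Q₀ := subset_convexHull ℝ _ hv0
  obtain ⟨v1, hv1⟩ := id hV₁ne
  obtain ⟨z1, rfl⟩ := hV₁ v1 hv1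
  have hz1 : toE z1 ∈ Q₁ := subset_convexHull ℝ _ hv1
  have hkR : (0:ℝ) < k := by exact_mod_cast hk
  induction j with
  | zero =>
    intro x hx
    obtain ⟨a, ha, b, ⟨q, hq, hqb⟩, hab⟩ := hx
    have hb : b = 0 := by rw [← hqb]; simp
    have hax : a = toE x := by rw [← hab, hb]; simp
    rw [hax] at ha
    obtain ⟨g, hg, hgs⟩ := normal_dec V₀ hV₀ne hV₀ k x ha
    exact ⟨g, fun i => i.elim0, hg, fun i => i.elim0, by simpa using hgs⟩
  | succ j ih =>
    intro x hx
    have hjR : (0:ℝ) ≤ j := j.cast_nonneg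
    have hx' : toE x ∈ ((k:ℝ) • Q₀ + (j:ℝ) • Q₁) + Q₁ := by
      push_cast at hx
      rw [hQ₁.add_smul hjR zero_le_one, one_smul, ← add_assoc] at hx
      exact hx
    obtain ⟨p, q, hp, hq, hxpq⟩ := peel ((k:ℝ) • Q₀ + (j:ℝ) • Q₁) ((hQ₀.smul _).add (hQ₁.smul _))
      ((hQ₀c.smul _).add (hQ₁c.smul _))
      ⟨k • z0 + j • z1, by
        rw [toE_add, toE_nsmul, toE_nsmul]
        exact Set.add_mem_add (Set.smul_mem_smul_set hz0) (Set.smul_mem_smul_set hz1)⟩ V₁ hV₁ (by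
        intro u w w' hw hw' hne hmax heq
        obtain ⟨v, v', hvv, hv, hv', hvmax, hveq⟩ := hedge u w w' hw hw' hne hmax heq
        refine ⟨k • v + j • w, k • v' + j • w, ?_, ?_, ?_, ?_, ?_⟩
        · intro h
          exact hvv (smul_right_injective (ℤ × ℤ) hk.ne' (add_right_cancel h))
        · rw [toE_add, toE_nsmul, toE_nsmul]
          exact Set.add_mem_add (Set.smul_mem_smul_set hv) (Set.smul_mem_smul_set hw)
        · rw [toE_add, toE_nsmul, toE_nsmul]
          exact Set.add_mem_add (Set.smul_mem_smul_set hv') (Set.smul_mem_smul_set hw)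
        · rintro _ ⟨_, ⟨a, ha, rfl⟩, _, ⟨b, hb, rfl⟩, rfl⟩
          simp only [toE_add, toE_nsmul, cr_smul, cr_add]
          exact add_le_add (mul_le_mul_of_nonneg_left (hvmax a ha) hkR.le)
            (mul_le_mul_of_nonneg_left (hmax b hb) hjR)
        · simp only [toE_add, toE_nsmul, cr_smul, cr_add, hveq]) x hx'
    obtain ⟨g, f, hg, hf, hgs⟩ := ih p hp
    refine ⟨g, Fin.cons q f, hg, ?_, ?_⟩
    · intro i
      refine Fin.cases ?_ ?_ i
      · simpa using hq
      · intro i; simpa using hf i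
    · rw [Fin.sum_univ_succ]
      simp only [Fin.cons_zero, Fin.cons_succ]
      rw [hxpq, hgs]
      abel

theorem dot2_perp (u x : Fin 2 → ℝ) : dot2 x ![-u 1, u 0] = cr u x := by
  simp [dot2, cr, Fin.sum_univ_two]; ring

def dotL (y : Fin 2 → ℝ) : (Fin 2 → ℝ) →ₗ[ℝ] ℝ where
  toFun x := dot2 x y
  map_add' := by intro a b; simp [dot2, Fin.sum_univ_two]; ring
  map_smul' := by intro t b; simp [dot2, Fin.sum_univ_two]; ring

theorem edge_of_fan (V : Finset (Fin 2 → ℝ)) (hVne : V.Nonempty) (hV : ∀ v ∈ V, ∃ z, v = toE z)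
    (Q₁ : Set (Fin 2 → ℝ)) (href : FanRefines (convexHull ℝ (V : Set (Fin 2 → ℝ))) Q₁) :
    EdgeProp (convexHull ℝ (V : Set (Fin 2 → ℝ))) Q₁ := by
  intro u w w' hw hw' hne hmax heq
  obtain ⟨p, hpV, hp⟩ := Finset.exists_max_image V (cr u) hVne
  have hpQ : p ∈ convexHull ℝ (V : Set (Fin 2 → ℝ)) := subset_convexHull ℝ _ hpV
  by_cases hex : ∃ p' ∈ V, p' ≠ p ∧ cr u p' = cr u p
  · obtain ⟨p', hp'V, hpne, hpe⟩ := hex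
    obtain ⟨a, rfl⟩ := hV p hpV
    obtain ⟨a', rfl⟩ := hV p' hp'V
    refine ⟨a, a', by rintro rfl; exact hpne rfl, hpQ, subset_convexHull ℝ _ hp'V, ?_, hpe⟩
    have : convexHull ℝ (V : Set (Fin 2 → ℝ)) ⊆ {y | crL u y ≤ cr u (toE a)} :=
      convexHull_min (fun b hb => hp b hb) (convex_halfSpace_le (crL u).isLinear _)
    exact fun q hq => this hq
  · exfalso
    push Not at hex
    set d : Fin 2 → ℝ := toE w' - toE w with hd
    have hev : ∀ᶠ ε : ℝ in nhdsWithin 0 (Set.Ioi 0),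
        ∀ v ∈ V, ε * |dot2 (v - p) d| ≤ cr u p - cr u v := by
      rw [Filter.eventually_all_finset]
      intro v hv
      by_cases hvp : v = p
      · subst hvp
        simp [dot2]
      · have hgap : 0 < cr u p - cr u v :=
          sub_pos.2 (lt_of_le_of_ne (hp v hv) (hex v hv hvp))
        apply Filter.Eventually.filter_mono nhdsWithin_le_nhds
        have hc : Continuous (fun ε : ℝ => ε * |dot2 (v - p) d|) := by fun_prop
        have := hc.tendsto 0
        simp only [zero_mul] at this
        filter_upwards [this.eventually (gt_mem_nhds hgap)] with ε hε using hε.le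
    obtain ⟨ε, hε, hε0⟩ := (hev.and self_mem_nhdsWithin).exists
    have hε0 : 0 < ε := hε0
    have hcone : ∀ t : ℝ, |t| = ε → (![-u 1, u 0] + t • d) ∈ normalCone (convexHull ℝ (V : Set (Fin 2 → ℝ))) p := by
      intro t ht
      have : convexHull ℝ (V : Set (Fin 2 → ℝ)) ⊆
          {y | dotL (![-u 1, u 0] + t • d) y ≤ dot2 p (![-u 1, u 0] + t • d)} := by
        apply convexHull_min _ (convex_halfSpace_le (dotL _).isLinear _)
        intro v hv
        show dot2 v _ ≤ dot2 p _
        have h1 := hε v hv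
        have h2 : t * dot2 (v - p) d ≤ ε * |dot2 (v - p) d| := by
          rw [← ht, ← abs_mul]; exact le_abs_self _
        have h3 : dot2 v (![-u 1, u 0] + t • d) - dot2 p (![-u 1, u 0] + t • d) =
            cr u v - cr u p + t * dot2 (v - p) d := by
          simp [dot2, cr, Fin.sum_univ_two]; ring
        linarith
      exact fun q hq => this hq
    obtain ⟨v, hv, hsub⟩ := href p hpQ
    have h1 := hsub (hcone ε (abs_of_pos hε0)) _ hw'
    have h2 := hsub (hcone (-ε) (by rw [abs_neg, abs_of_pos hε0])) _ hw
    have h3 := hmax v hv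
    have e : ∀ (x : Fin 2 → ℝ) (t : ℝ), dot2 x (![-u 1, u 0] + t • d) = cr u x + t * dot2 x d := by
      intro x t
      simp [dot2, cr, Fin.sum_univ_two]; ring
    rw [e, e] at h1 h2
    have h4 : ε * (dot2 (toE w') d - dot2 (toE w) d) ≤ 0 := by linarith
    have h5 : dot2 (toE w') d - dot2 (toE w) d = d 0 ^ 2 + d 1 ^ 2 := by
      simp [dot2, Fin.sum_univ_two, hd]; ring
    rw [h5] at h4
    have h6 : d 0 ^ 2 + d 1 ^ 2 ≤ 0 := by
      by_contra hn
      push Not at hn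
      linarith [mul_pos hε0 hn]
    have d0 : d 0 = 0 := by nlinarith [sq_nonneg (d 0), sq_nonneg (d 1)]
    have d1 : d 1 = 0 := by nlinarith [sq_nonneg (d 0), sq_nonneg (d 1)]
    apply hne
    apply toE_inj
    have : d = 0 := by ext i; fin_cases i <;> simp [d0, d1]
    rw [hd] at this
    exact (sub_eq_zero.1 this).symm

theorem lat_toE (x : Fin 2 → ℝ) (hx : IsLatticePt x) : ∃ z, x = toE z := by
  obtain ⟨a, ha⟩ := hx 0
  obtain ⟨b, hb⟩ := hx 1
  exact ⟨(a, b), by ext i; fin_cases i <;> simp [toE, ha, hb]⟩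

theorem toE_lat (z : ℤ × ℤ) : IsLatticePt (toE z) := by
  intro i
  fin_cases i
  · exact ⟨z.1, by simp [toE]⟩
  · exact ⟨z.2, by simp [toE]⟩

def embA (t : ℝ) : (Fin 2 → ℝ) →ᵃ[ℝ] (Fin 3 → ℝ) where
  toFun v := emb v t
  linear :=
    { toFun := fun v => emb v 0
      map_add' := by intro a b; ext i; fin_cases i <;> simp [emb]
      map_smul' := by intro a b; ext i; fin_cases i <;> simp [emb] }
  map_vadd' := by intro a b; ext i; fin_cases i <;> simp [emb]

theorem cayley_split (Q₀ Q₁ : Set (Fin 2 → ℝ)) (h0 : Convex ℝ Q₀) (h1 : Convex ℝ Q₁)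
    (n0 : Q₀.Nonempty) (n1 : Q₁.Nonempty) (y : Fin 3 → ℝ) (hy : y ∈ cayley Q₀ Q₁) :
    ∃ a ∈ Q₀, ∃ b ∈ Q₁, ∃ t : ℝ, y = emb ((1 - t) • a + t • b) t := by
  unfold cayley at hy
  rw [convexHull_union (n0.image _) (n1.image _)] at hy
  have c0 : Convex ℝ ((fun v => emb v 0) '' Q₀) := h0.affine_image (embA 0)
  have c1 : Convex ℝ ((fun v => emb v 1) '' Q₁) := h1.affine_image (embA 1)
  rw [c0.convexHull_eq, c1.convexHull_eq, mem_convexJoin] at hy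
  obtain ⟨_, ⟨a, ha, rfl⟩, _, ⟨b, hb, rfl⟩, hseg⟩ := hy
  rw [segment_eq_image] at hseg
  obtain ⟨t, -, rfl⟩ := hseg
  refine ⟨a, ha, b, hb, t, ?_⟩
  ext i; fin_cases i <;> simp [emb]

/-- Lattice points of dilates of a Cayley polytope split level-wise. -/
theorem stmt10 (Q₀ Q₁ : Set (Fin 2 → ℝ))
    (h0 : IsLatticePolytope Q₀) (h1 : IsLatticePolytope Q₁)
    (h0dim : (interior Q₀).Nonempty) (h0sm : IsSmoothPolygon Q₀)
    (href : FanRefines Q₀ Q₁) (hsub : Q₁ ⊆ Q₀)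
    (n : ℕ) (hn : 1 ≤ n) (j : ℕ) (hj : j ≤ n)
    (x : Fin 3 → ℝ) (hx : x ∈ (n : ℝ) • cayley Q₀ Q₁) (hxint : IsLatticePt x)
    (hht : x 2 = (j : ℝ)) :
    ∃ (f : Fin j → (Fin 2 → ℝ)) (g : Fin (n - j) → (Fin 2 → ℝ)),
      (∀ i, f i ∈ Q₁ ∧ IsLatticePt (f i)) ∧
      (∀ i, g i ∈ Q₀ ∧ IsLatticePt (g i)) ∧
      x = (∑ i, emb (f i) 1) + ∑ i, emb (g i) 0 := by
  obtain ⟨V₀, hV₀ne, hV₀, rfl⟩ := h0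
  obtain ⟨V₁, hV₁ne, hV₁, rfl⟩ := h1
  have hedge := edge_of_fan V₀ hV₀ne (fun v hv => lat_toE v (hV₀ v hv)) _ href
  obtain ⟨y, hy, rfl⟩ := hx
  obtain ⟨a, ha, b, hb, t, rfl⟩ := cayley_split _ _ (convex_convexHull ℝ _) (convex_convexHull ℝ _)
    hV₀ne.to_set.convexHull hV₁ne.to_set.convexHull y hy
  have hnt : (n:ℝ) * t = j := by simpa [emb] using hht
  obtain ⟨z0, hz0⟩ := hxint 0
  obtain ⟨z1, hz1⟩ := hxint 1
  have hcast : ((n - j : ℕ) : ℝ) = n - j := by rw [Nat.cast_sub hj]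
  have hz : toE (z0, z1) = ((n - j : ℕ) : ℝ) • a + (j : ℝ) • b := by
    ext i
    fin_cases i
    · simp [toE, ← hz0, emb, hcast, ← hnt]; ring
    · simp [toE, ← hz1, emb, hcast, ← hnt]; ring
  have hmem : toE (z0, z1) ∈ ((n - j : ℕ) : ℝ) • convexHull ℝ (V₀ : Set (Fin 2 → ℝ)) +
      (j : ℝ) • convexHull ℝ (V₁ : Set (Fin 2 → ℝ)) := by
    rw [hz]
    exact Set.add_mem_add (Set.smul_mem_smul_set ha) (Set.smul_mem_smul_set hb)
  have hdec : ∃ (g : Fin (n - j) → ℤ × ℤ) (f : Fin j → ℤ × ℤ),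
      (∀ i, toE (g i) ∈ convexHull ℝ (V₀ : Set (Fin 2 → ℝ))) ∧
      (∀ i, toE (f i) ∈ convexHull ℝ (V₁ : Set (Fin 2 → ℝ))) ∧
      (z0, z1) = ∑ i, g i + ∑ i, f i := by
    rcases Nat.eq_zero_or_pos (n - j) with hk | hk
    · obtain ⟨f, hf, hfs⟩ := normal_dec V₁ hV₁ne (fun v hv => lat_toE v (hV₁ v hv)) j (z0, z1) (by
        rw [hz, hk]
        simp only [Nat.cast_zero, zero_smul, zero_add]
        exact Set.smul_mem_smul_set hb)
      have he : IsEmpty (Fin (n - j)) := by rw [hk]; infer_instance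
      exact ⟨fun i => he.elim i, f, fun i => he.elim i, hf, by simpa using hfs⟩
    · exact mixed_dec V₀ V₁ hV₀ne hV₁ne (fun v hv => lat_toE v (hV₀ v hv))
        (fun v hv => lat_toE v (hV₁ v hv)) hedge _ hk j (z0, z1) hmem
  obtain ⟨g, f, hg, hf, hs⟩ := hdec
  refine ⟨fun i => toE (f i), fun i => toE (g i), fun i => ⟨hf i, toE_lat _⟩,
    fun i => ⟨hg i, toE_lat _⟩, ?_⟩
  have hs0 := congrArg Prod.fst hs
  have hs1 := congrArg Prod.snd hs
  simp only [Prod.fst_add, Prod.snd_add, Prod.fst_sum, Prod.snd_sum] at hs0 hs1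
  ext i
  fin_cases i
  · show ((n:ℝ) • emb ((1 - t) • a + t • b) t) 0 = _
    refine hz0.trans ?_
    rw [hs0]
    simp [Finset.sum_apply, emb, toE, add_comm]
  · refine hz1.trans ?_
    rw [hs1]
    simp [Finset.sum_apply, emb, toE, add_comm]
  · refine hht.trans ?_
    simp [Finset.sum_apply, emb]
end
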